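/- arXiv:1509.03212 — 6 statements merged into one kernel-verified Lean document; each statement's English description precedes it below -/
import Mathlib

section
/- Let (G,X,r) be a single-sink buy-at-bulk instance with |X| = k ≥ 1 terminals to be connected to the sink r, let h ≥ 1 be an integer, and let G^up be the h-level upward layered expansion of G (with parameter k). There is an absolute constant C such that if (G,X,r) has a feasible solution of objective value φ, then the single-sink instance on G^up connecting the level-h copies of the terminals of X to the level-0 copy of r has a feasible solution of objective value at most C·h·k^{1/h}·φ. -/
namespace BaB

/-- A walk from `s` to `t` using edges from `E`, given as the list of traversed edges. -/
def IsWalk {W : Type} (E : Set (W × W)) : W → W → List (W × W) → Prop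
  | s, t, [] => s = t
  | s, t, e :: p => e.1 = s ∧ e ∈ E ∧ IsWalk E e.2 t p

/-- Buy-at-bulk (two-metric) objective value of a collection of paths. -/
def objVal {A : Type} [DecidableEq A] (c ℓ : A → ℝ) {k : ℕ} (P : Fin k → List A) : ℝ :=
  (∑ e ∈ Finset.univ.biUnion fun i => (P i).toFinset, c e) + ∑ i, ((P i).map ℓ).sum

/-- `g` is a flow of value `v` from `s` to `r`, supported on `E`. -/
def IsFlow {W : Type} [Fintype W] (E : Set (W × W)) (g : W × W → ℝ) (s r : W) (v : ℝ) : Prop :=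
  (∀ e, 0 ≤ g e) ∧ (∀ e, e ∉ E → g e = 0) ∧
  (∀ u, u ≠ s → u ≠ r → (∑ w : W, g (w, u)) = ∑ w : W, g (u, w)) ∧
  (∑ w : W, g (s, w)) - (∑ w : W, g (w, s)) = v

/-- Weight of a walk of `G` in the combined metric `c_e + k^(1-i/h)·ℓ_e` used for the
edge between levels `i` and `i-1` of the layered expansion. -/
noncomputable def upCost {V : Type} (c ℓ : V × V → ℝ) (k h : ℕ) (i : Fin (h + 1))
    (w : List (V × V)) : ℝ :=
  (w.map fun e => c e + (k : ℝ) ^ ((1 : ℝ) - (i : ℕ) / (h : ℝ)) * ℓ e).sum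

/-- Edges of the `h`-level upward layered expansion `G^up`: from the level-`i` copy of
`u` to the level-`(i-1)` copy of `v`, whenever `G` has a directed `u → v` walk. -/
def upEdges {V : Type} (E : Set (V × V)) (h : ℕ) :
    Set ((Fin (h + 1) × V) × (Fin (h + 1) × V)) :=
  {p | ∃ (i j : Fin (h + 1)) (u v : V), p = ((i, u), (j, v)) ∧ (j : ℕ) + 1 = (i : ℕ) ∧
        ∃ w, IsWalk E u v w}

/-- Edges of the `h`-level downward layered expansion `G^down`: from the
level-`(i-1)` copy of `u` to the level-`i` copy of `v`, whenever `G` has a directed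
`u → v` walk. -/
def downEdges {V : Type} (E : Set (V × V)) (h : ℕ) :
    Set ((Fin (h + 1) × V) × (Fin (h + 1) × V)) :=
  {p | ∃ (i j : Fin (h + 1)) (u v : V), p = ((j, u), (i, v)) ∧ (j : ℕ) + 1 = (i : ℕ) ∧
        ∃ w, IsWalk E u v w}

/-- `(c', ℓ')` are valid costs and lengths for `G^up`: the cost of each edge between
levels `i` and `i-1` is the minimum over directed `u → v` walks `w` of
`Σ_{e ∈ w} (c_e + k^(1-i/h) ℓ_e)`, and its length is `Σ_{e ∈ w} ℓ_e` for a walk `w`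
attaining this minimum. -/
def UpCostsValid {V : Type} (E : Set (V × V)) (c ℓ : V × V → ℝ) (k h : ℕ)
    (c' ℓ' : (Fin (h + 1) × V) × (Fin (h + 1) × V) → ℝ) : Prop :=
  ∀ (i j : Fin (h + 1)) (u v : V), ((i, u), (j, v)) ∈ upEdges E h →
    ∃ w, IsWalk E u v w ∧
      IsLeast {t | ∃ w', IsWalk E u v w' ∧ t = upCost c ℓ k h i w'} (upCost c ℓ k h i w) ∧
      c' ((i, u), (j, v)) = upCost c ℓ k h i w ∧ ℓ' ((i, u), (j, v)) = (w.map ℓ).sum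

/-- Valid costs and lengths for `G^down` (the exponent is determined by the deeper
level `i` of the edge). -/
def DownCostsValid {V : Type} (E : Set (V × V)) (c ℓ : V × V → ℝ) (k h : ℕ)
    (c'' ℓ'' : (Fin (h + 1) × V) × (Fin (h + 1) × V) → ℝ) : Prop :=
  ∀ (i j : Fin (h + 1)) (u v : V), ((j, u), (i, v)) ∈ downEdges E h →
    ∃ w, IsWalk E u v w ∧
      IsLeast {t | ∃ w', IsWalk E u v w' ∧ t = upCost c ℓ k h i w'} (upCost c ℓ k h i w) ∧
      c'' ((j, u), (i, v)) = upCost c ℓ k h i w ∧ ℓ'' ((j, u), (i, v)) = (w.map ℓ).sum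


open scoped Finset

/-!
Only the edges used by the given solution matter. In this finite graph choose, for every vertex, a
shortest walk to `r`, breaking ties by a total order that is compatible with adding an edge in
front; the chosen walks then form an in-tree, whose cost and total length are at most those of the
solution.

Let `T i = k^(1-i/h)`, so that `T (i-1) = k^(1/h) * T i`. When climbing from level `i` to `i-1`,
every terminal advances along its tree route to the first point where it can join a group of more
than `T (i-1)` terminals with the same remaining route, or to `r` if there is none. A tree edge is
thereby traversed by at most `T (i-1)` terminals, since any larger group would have stopped before
it. The terminals that do advance already come in groups of at least `T i`, and each group pays for
its expansion edge only once. Both the cost and the length of the expansion edges from level `i` to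
`i-1` are hence at most `T (i-1) / T i = k^(1/h)` times the cost of the tree plus the length
travelled between the two levels. Over all levels, the lengths travelled add up to the total length
of the tree routes. A terminal arriving at level `0` has reached `r`, as no group exceeds `T 0 = k`.
-/

namespace IsWalk

variable {W : Type} {E : Set (W × W)} {p q : List (W × W)} {s t : W}

theorem mem (h : IsWalk E s t p) {e : W × W} (he : e ∈ p) : e ∈ E := by
  induction p generalizing s with
  | nil => simp at he
  | cons a p ih =>
    rcases List.mem_cons.1 he with rfl | he
    · exact h.2.1
    · exact ih h.2.2 he

theorem of_subset {H : Set (W × W)} (h : IsWalk E s t p) (hp : ∀ e ∈ p, e ∈ H) :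
    IsWalk H s t p := by
  induction p generalizing s with
  | nil => exact h
  | cons a p ih =>
    rw [List.forall_mem_cons] at hp
    exact ⟨h.1, hp.1, ih h.2.2 hp.2⟩

theorem exists_of_append (h : IsWalk E s t (p ++ q)) :
    ∃ v, IsWalk E s v p ∧ IsWalk E v t q := by
  induction p generalizing s with
  | nil => exact ⟨s, rfl, h⟩
  | cons a p ih =>
    obtain ⟨v, hp, hq⟩ := ih h.2.2
    exact ⟨v, ⟨h.1, h.2.1, hp⟩, hq⟩

theorem source_eq {s' : W} (h : IsWalk E s t p) (h' : IsWalk E s' t p) : s = s' := by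
  cases p with
  | nil => exact Eq.trans h (Eq.symm h')
  | cons a p => exact h.1.symm.trans h'.1

end IsWalk

/-- Routes that never separate once they share an edge: that edge determines the remainder.
This stands for an in-tree towards the sink, in a form that passes to suffixes of the routes. -/
def Coalescing {ι A : Type*} (L : ι → List A) : Prop :=
  ∀ ⦃i j e q q'⦄, e :: q <:+ L i → e :: q' <:+ L j → q = q'

namespace Coalescing

variable {ι A : Type*} {L : ι → List A}

theorem of_suffix (hL : Coalescing L) {L' : ι → List A} (h : ∀ i, L' i <:+ L i) :
    Coalescing L' :=
  fun _ _ _ _ _ hi hj => hL (hi.trans (h _)) (hj.trans (h _))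

theorem nodup (hL : Coalescing L) (i : ι) : (L i).Nodup := by
  suffices ∀ q, q <:+ L i → q.Nodup from this _ List.suffix_rfl
  intro q hq
  induction q with
  | nil => exact List.nodup_nil
  | cons e q ih =>
    refine List.nodup_cons.2 ⟨fun he => ?_, ih ((List.suffix_cons e q).trans hq)⟩
    obtain ⟨s, q', rfl⟩ := List.append_of_mem he
    have hq' : e :: q' <:+ L i := (List.suffix_append (e :: s) _).trans hq
    have hlen := congrArg List.length (hL hq hq')
    simp only [List.length_append, List.length_cons] at hlen
    omega

end Coalescing

theorem coalescing_of_minimal_walks {W β : Type} [LinearOrder β] {E : Set (W × W)} {r : W}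
    {key : List (W × W) → β}
    (hcons : ∀ e q q', key q < key q' → key (e :: q) < key (e :: q'))
    (hinj : Set.InjOn key {q | ∀ e ∈ q, e ∈ E}) {p : W → List (W × W)}
    (hp : ∀ v q, IsWalk E v r q → IsWalk E v r (p v) ∧ key (p v) ≤ key q)
    {ι : Type*} {x : ι → W} (hx : ∀ i, IsWalk E (x i) r (p (x i))) :
    Coalescing fun i => p (x i) := by
  have tail_eq : ∀ {v e q}, IsWalk E v r (p v) → p v = e :: q →
      IsWalk E e.2 r q ∧ p e.2 = q := by
    intro v e q hv hpv
    rw [hpv] at hv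
    obtain ⟨hwalk, hle⟩ := hp e.2 q hv.2.2
    refine ⟨hv.2.2, hinj (fun _ => hwalk.mem) (fun _ => hv.2.2.mem) (hle.eq_of_not_lt ?_)⟩
    intro hlt
    have hmin := (hp v (e :: p e.2) ⟨hv.1, hv.2.1, hwalk⟩).2
    rw [hpv] at hmin
    exact hmin.not_gt (hcons _ _ _ hlt)
  have suffix_eq : ∀ {v e q}, IsWalk E v r (p v) → e :: q <:+ p v → p e.2 = q := by
    intro v e q hv hq
    generalize hl : p v = l at hq
    induction l generalizing v with
    | nil => simp at hq
    | cons a l ih =>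
      obtain ⟨hwalk, heq⟩ := tail_eq hv hl
      rcases List.suffix_cons_iff.1 hq with h | h
      · obtain ⟨rfl, rfl⟩ := List.cons.inj h
        exact heq
      · exact ih (heq ▸ hwalk) heq h
  intro i j e q q' hi hj
  exact (suffix_eq (hx i) hi).symm.trans (suffix_eq (hx j) hj)

/-- Walks may repeat edges, so there are infinitely many of them even in a finite graph; this is
why a shortest one exists nevertheless. -/
theorem isPWO_map_sum {A : Type*} {E : Set A} (hE : E.Finite) {ℓ : A → ℝ} (hℓ : ∀ e, 0 ≤ ℓ e) :
    ((fun q : List A => (q.map ℓ).sum) '' {q | ∀ e ∈ q, e ∈ E}).IsPWO := by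
  refine (Set.IsPWO.addSubmonoid_closure (s := ℓ '' E) ?_ (hE.image ℓ).isPWO).mono ?_
  · rintro _ ⟨e, -, rfl⟩
    exact hℓ e
  · rintro _ ⟨q, hq, rfl⟩
    refine list_sum_mem fun y hy => ?_
    obtain ⟨e, he, rfl⟩ := List.mem_map.1 hy
    exact AddSubmonoid.subset_closure (Set.mem_image_of_mem ℓ (hq e he))

/-- Total length with ties broken by the code of the list of edge numbers `f e`.  Coding a list
as `Nat.pair head tail + 1` makes the tie-break strictly monotone in the tail. -/
noncomputable def lengthKey {A : Type*} (ℓ : A → ℝ) (f : A → ℕ) (q : List A) : ℝ ×ₗ ℕ :=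
  toLex ((q.map ℓ).sum, Encodable.encode (q.map f))

section LengthKey

variable {A : Type*} {ℓ : A → ℝ} {f : A → ℕ}

theorem lengthKey_cons_lt_cons (e : A) (q q' : List A)
    (h : lengthKey ℓ f q < lengthKey ℓ f q') :
    lengthKey ℓ f (e :: q) < lengthKey ℓ f (e :: q') := by
  simp only [lengthKey, Prod.Lex.toLex_lt_toLex, List.map_cons, List.sum_cons,
    add_lt_add_iff_left, add_right_inj, Encodable.encode_list_cons, Nat.succ_lt_succ_iff] at h ⊢
  exact h.imp_right fun h => ⟨h.1, Nat.pair_lt_pair_right _ h.2⟩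

theorem injOn_list_map {B : Type*} {g : A → B} {E : Set A} (hg : Set.InjOn g E) :
    Set.InjOn (List.map g) {q | ∀ e ∈ q, e ∈ E} := by
  intro q hq q' hq' h
  induction q generalizing q' with
  | nil => exact (List.map_eq_nil_iff.1 h.symm).symm
  | cons e q ih =>
    obtain ⟨e', p, rfl, he, hp⟩ := List.map_eq_cons_iff.1 h.symm
    simp only [Set.mem_ofPred_eq, List.forall_mem_cons] at hq hq'
    rw [hg hq'.1 hq.1 he, ih hq.2 hq'.2 hp.symm]

theorem injOn_lengthKey {E : Set A} (hf : Set.InjOn f E) :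
    Set.InjOn (lengthKey ℓ f) {q | ∀ e ∈ q, e ∈ E} := by
  intro q hq q' hq' h
  have hcode : Encodable.encode (q.map f) = Encodable.encode (q'.map f) :=
    congrArg (fun x => (ofLex x).2) h
  exact injOn_list_map hf hq hq' (Encodable.encode_injective hcode)

theorem exists_lengthKey_le {E : Set A} (hE : E.Finite) (hℓ : ∀ e, 0 ≤ ℓ e) {S : Set (List A)}
    (hS : S.Nonempty) (hSE : ∀ q ∈ S, ∀ e ∈ q, e ∈ E) :
    ∃ p ∈ S, ∀ q ∈ S, lengthKey ℓ f p ≤ lengthKey ℓ f q := by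
  obtain ⟨p₀, hp₀, hmin₀⟩ :=
    ((isPWO_map_sum hE hℓ).mono (Set.image_mono hSE)).exists_minimalFor _ S hS
  obtain ⟨p, ⟨hp, hpp₀⟩, hmin⟩ := exists_minimalFor_of_wellFoundedLT
    (fun q => q ∈ S ∧ (q.map ℓ).sum = (p₀.map ℓ).sum) (fun q => Encodable.encode (q.map f))
    ⟨p₀, hp₀, rfl⟩
  refine ⟨p, hp, fun q hq => Prod.Lex.toLex_le_toLex.2 ?_⟩
  rw [hpp₀]
  rcases (le_of_not_gt fun h => (hmin₀ hq h.le).not_gt h).lt_or_eq with h | h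
  · exact .inl h
  · exact .inr ⟨h, le_of_not_gt fun hlt => (hmin ⟨hq, h.symm⟩ hlt.le).not_gt hlt⟩

end LengthKey

theorem exists_coalescing_shortest_walks {W : Type} {E : Set (W × W)} (hE : E.Finite)
    {ℓ : W × W → ℝ} (hℓ : ∀ e, 0 ≤ ℓ e) {r : W} {ι : Type*} {x : ι → W}
    {P : ι → List (W × W)} (hP : ∀ i, IsWalk E (x i) r (P i)) :
    ∃ L : ι → List (W × W), Coalescing L ∧ (∀ i, IsWalk E (x i) r (L i)) ∧
      ∀ i, ((L i).map ℓ).sum ≤ ((P i).map ℓ).sum := by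
  obtain ⟨f, hf⟩ := Set.countable_iff_exists_injOn.1 hE.countable
  have hmin : ∀ v, ∃ p, ∀ q, IsWalk E v r q →
      IsWalk E v r p ∧ lengthKey ℓ f p ≤ lengthKey ℓ f q := by
    intro v
    by_cases hv : ∃ q, IsWalk E v r q
    · obtain ⟨p, hp, hle⟩ := exists_lengthKey_le (S := {q | IsWalk E v r q}) (f := f) hE hℓ hv
        fun q hq e => hq.mem
      exact ⟨p, fun q hq => ⟨hp, hle q hq⟩⟩
    · exact ⟨[], fun q hq => (hv ⟨q, hq⟩).elim⟩
  choose p hp using hmin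
  have hwalk : ∀ i, IsWalk E (x i) r (p (x i)) := fun i => (hp _ _ (hP i)).1
  refine ⟨fun i => p (x i),
    coalescing_of_minimal_walks lengthKey_cons_lt_cons (injOn_lengthKey hf) hp hwalk, hwalk,
    fun i => ?_⟩
  rcases Prod.Lex.toLex_le_toLex.1 (hp _ _ (hP i)).2 with h | h
  · exact h.le
  · exact h.1.le

/-- The cost of the union of the routes: the first summand of `objVal`. -/
def usedCost {A : Type} [DecidableEq A] (c : A → ℝ) {k : ℕ} (P : Fin k → List A) : ℝ :=
  ∑ e ∈ Finset.univ.biUnion fun i => (P i).toFinset, c e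

/-- The sum of the lengths of the routes: the second summand of `objVal`. -/
def totalLength {A : Type} (ℓ : A → ℝ) {k : ℕ} (P : Fin k → List A) : ℝ :=
  ∑ i, ((P i).map ℓ).sum

section Objective

variable {A : Type} {c ℓ : A → ℝ} {k : ℕ}

theorem list_sum_map_nonneg (hc : ∀ e, 0 ≤ c e) (q : List A) : 0 ≤ (q.map c).sum := by
  refine List.sum_nonneg fun y hy => ?_
  obtain ⟨e, -, rfl⟩ := List.mem_map.1 hy
  exact hc e

theorem totalLength_nonneg (hℓ : ∀ e, 0 ≤ ℓ e) (P : Fin k → List A) : 0 ≤ totalLength ℓ P :=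
  Finset.sum_nonneg fun _ _ => list_sum_map_nonneg hℓ _

theorem totalLength_append (ℓ : A → ℝ) (P Q : Fin k → List A) :
    totalLength ℓ (fun i => P i ++ Q i) = totalLength ℓ P + totalLength ℓ Q := by
  simp only [totalLength, List.map_append, List.sum_append, Finset.sum_add_distrib]

variable [DecidableEq A]

theorem usedCost_mono (hc : ∀ e, 0 ≤ c e) {P Q : Fin k → List A}
    (h : ∀ i, ∀ e ∈ P i, ∃ j, e ∈ Q j) : usedCost c P ≤ usedCost c Q := by
  refine Finset.sum_le_sum_of_subset_of_nonneg (fun e he => ?_) fun e _ _ => hc e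
  simp only [Finset.mem_biUnion, Finset.mem_univ, true_and, List.mem_toFinset] at he ⊢
  exact he.elim fun i hi => h i e hi

theorem objVal_nil (c ℓ : A → ℝ) : objVal c ℓ (fun _ : Fin k => []) = 0 := by
  have hunion : (Finset.univ.biUnion fun _ : Fin k => (∅ : Finset A)) = ∅ := by
    ext
    simp
  simp [objVal, hunion]

theorem objVal_cons_le (ℓ : A → ℝ) {e : Fin k → A} (he : ∀ i, 0 ≤ c (e i))
    (Q : Fin k → List A) :
    objVal c ℓ (fun i => e i :: Q i) ≤
      ∑ x ∈ Finset.univ.image e, c x + ∑ i, ℓ (e i) + objVal c ℓ Q := by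
  have hunion : (Finset.univ.biUnion fun i => (e i :: Q i).toFinset) =
      Finset.univ.image e ∪ Finset.univ.biUnion fun i => (Q i).toFinset := by
    simp only [List.toFinset_cons, Finset.insert_eq, Finset.biUnion_union,
      Finset.biUnion_singleton]
  have hinter : 0 ≤ ∑ x ∈ Finset.univ.image e ∩ Finset.univ.biUnion fun i => (Q i).toFinset,
      c x := by
    refine Finset.sum_nonneg fun x hx => ?_
    obtain ⟨i, -, rfl⟩ := Finset.mem_image.1 (Finset.mem_inter.1 hx).1
    exact he i
  have hsum := Finset.sum_union_inter (s₁ := Finset.univ.image e)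
    (s₂ := Finset.univ.biUnion fun i => (Q i).toFinset) (f := c)
  simp only [objVal, hunion, List.map_cons, List.sum_cons, Finset.sum_add_distrib]
  linarith

end Objective

theorem mul_sum_image_le {ι B : Type*} [DecidableEq B] {s : Finset ι} {e : ι → B} {g : B → ℝ}
    {t : ℝ} (hg : ∀ i ∈ s, 0 ≤ g (e i))
    (ht : ∀ i ∈ s, g (e i) ≠ 0 → t ≤ #{j ∈ s | e j = e i}) :
    t * ∑ x ∈ s.image e, g x ≤ ∑ i ∈ s, g (e i) := by
  rw [Finset.sum_comp g e, Finset.mul_sum]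
  refine Finset.sum_le_sum fun x hx => ?_
  obtain ⟨i, hi, rfl⟩ := Finset.mem_image.1 hx
  rw [nsmul_eq_mul]
  by_cases h0 : g (e i) = 0
  · simp only [h0, mul_zero, le_refl]
  · exact mul_le_mul_of_nonneg_right (ht i hi h0) (hg i hi)

section Bundling

variable {ι A : Type*} [DecidableEq A]

theorem exists_longest_heavy_suffix (s : Finset ι) (L : ι → List A) {T : ℝ}
    (hT : 0 ≤ T) (h : ∃ y, T < #{i ∈ s | y <:+ L i}) :
    ∃ y, T < #{i ∈ s | y <:+ L i} ∧
      ∀ z, y.length < z.length → (#{i ∈ s | z <:+ L i} : ℝ) ≤ T := by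
  have hbound : ∀ z : List A, T < #{i ∈ s | z <:+ L i} → z.length ≤ ∑ i ∈ s, (L i).length := by
    intro z hz
    have hcard : 0 < #{i ∈ s | z <:+ L i} := by exact_mod_cast hT.trans_lt hz
    obtain ⟨i, hi⟩ := Finset.card_pos.1 hcard
    obtain ⟨his, hiz⟩ := Finset.mem_filter.1 hi
    exact hiz.length_le.trans
      (Finset.single_le_sum (f := fun i => (L i).length) (fun _ _ => Nat.zero_le _) his)
  obtain ⟨y, hyT, hmax⟩ := exists_minimalFor_of_wellFoundedLT
    (fun y : List A => T < #{i ∈ s | y <:+ L i})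
    (fun y => ∑ i ∈ s, (L i).length - y.length) h
  refine ⟨y, hyT, fun z hz => le_of_not_gt fun hzT => ?_⟩
  have hz_bound := hbound z hzT
  have := hmax hzT (by dsimp only; omega)
  dsimp only at this
  omega

/-- Trimming every list of a bundle to the longest suffix shared by more than `T` of the
remaining lists, and repeating with the lists outside the bundle. -/
theorem exists_bundling (s : Finset ι) (L : ι → List A) {T : ℝ} (hT : 0 ≤ T) :
    ∃ F : List A → List A, (∀ x, F x <:+ x) ∧
      (∀ i ∈ s, F (L i) ≠ [] → T < #{j ∈ s | F (L j) = F (L i)}) ∧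
      ∀ z, (#{j ∈ s | z <:+ L j ∧ ¬ z <:+ F (L j)} : ℝ) ≤ T := by
  induction s using Finset.strongInduction with
  | H s ih =>
  by_cases hheavy : ∃ y, T < #{i ∈ s | y <:+ L i}
  · obtain ⟨y, hyT, hlight⟩ := exists_longest_heavy_suffix s L hT hheavy
    have hcard : 0 < #{i ∈ s | y <:+ L i} := by exact_mod_cast hT.trans_lt hyT
    have hss : {i ∈ s | ¬ y <:+ L i} ⊂ s := by
      obtain ⟨i, hi⟩ := Finset.card_pos.1 hcard
      exact Finset.filter_ssubset.2 ⟨i, (Finset.mem_filter.1 hi).1,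
        not_not.2 (Finset.mem_filter.1 hi).2⟩
    obtain ⟨F, hF, hbig, hload⟩ := ih _ hss
    refine ⟨fun x => if y <:+ x then y else F x, fun x => ?_, fun i hi hne => ?_, fun z => ?_⟩
    · dsimp only
      split_ifs with h
      exacts [h, hF x]
    · by_cases h : y <:+ L i
      · refine hyT.trans_le (Nat.cast_le.2 (Finset.card_le_card fun j hj => ?_))
        grind
      · simp only [h, if_false] at hne ⊢
        refine (hbig i (by grind) hne).trans_le (Nat.cast_le.2 (Finset.card_le_card fun j hj => ?_))
        grind
    · by_cases hz : ∃ j ∈ s, y <:+ L j ∧ z <:+ L j ∧ ¬ z <:+ y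
      · obtain ⟨j, -, hyj, hzj, hzy⟩ := hz
        have hlen : y.length < z.length :=
          lt_of_not_ge fun h => hzy (List.suffix_of_suffix_length_le hzj hyj h)
        refine le_trans (Nat.cast_le.2 (Finset.card_le_card fun j hj => ?_)) (hlight z hlen)
        grind
      · refine le_trans (Nat.cast_le.2 (Finset.card_le_card fun j hj => ?_)) (hload z)
        grind
  · push Not at hheavy
    exact ⟨fun _ => [], fun _ => List.nil_suffix, fun _ _ h => (h rfl).elim, fun z =>
      le_trans (Nat.cast_le.2 (Finset.card_le_card fun j hj => by grind)) (hheavy z)⟩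

end Bundling

namespace Coalescing

variable {A : Type} [DecidableEq A] {k : ℕ} {u w : Fin k → List A} {T : ℝ}

/-- In a coalescing family, the lists through an edge are those having one particular suffix, so
bounds on the multiplicity of suffixes are bounds on the load of edges. -/
theorem card_mem_prefix_le (hL : Coalescing fun i => u i ++ w i) (hT : 0 ≤ T)
    (hload : ∀ z, (#{i | z <:+ u i ++ w i ∧ ¬ z <:+ w i} : ℝ) ≤ T) (e : A) :
    (#{i | e ∈ u i} : ℝ) ≤ T := by
  rcases Finset.eq_empty_or_nonempty ({i | e ∈ u i} : Finset (Fin k)) with h | ⟨i₀, hi₀⟩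
  · simpa [h] using hT
  have hsuffix : ∀ i, e ∈ u i → ∃ q, e :: q <:+ u i ++ w i := by
    intro i hi
    obtain ⟨s, q, hu⟩ := List.append_of_mem hi
    exact ⟨q ++ w i, s, by simp [hu]⟩
  obtain ⟨q, hq⟩ := hsuffix i₀ (Finset.mem_filter.1 hi₀).2
  refine le_trans (Nat.cast_le.2 (Finset.card_le_card fun i hi => ?_)) (hload (e :: q))
  have hei := (Finset.mem_filter.1 hi).2
  obtain ⟨q', hq'⟩ := hsuffix i hei
  refine Finset.mem_filter.2 ⟨Finset.mem_univ i, hL hq hq' ▸ hq', fun hw => ?_⟩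
  exact List.disjoint_of_nodup_append (hL.nodup i) hei (hw.mem List.mem_cons_self)

theorem sum_prefix_le (hL : Coalescing fun i => u i ++ w i) (hT : 0 ≤ T)
    (hload : ∀ z, (#{i | z <:+ u i ++ w i ∧ ¬ z <:+ w i} : ℝ) ≤ T)
    {c : A → ℝ} (hc : ∀ e, 0 ≤ c e) :
    ∑ i, ((u i).map c).sum ≤ T * usedCost c fun i => u i ++ w i := by
  have hu : ∀ i, ((u i).map c).sum =
      ∑ e ∈ Finset.univ.biUnion fun i => (u i ++ w i).toFinset, if e ∈ u i then c e else 0 := by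
    intro i
    rw [← List.sum_toFinset c (hL.nodup i).of_append_left, ← Finset.sum_filter]
    congr 1
    ext e
    simp only [List.mem_toFinset, Finset.mem_filter, Finset.mem_biUnion, Finset.mem_univ,
      true_and, List.mem_append]
    exact ⟨fun h => ⟨⟨i, .inl h⟩, h⟩, And.right⟩
  simp only [hu, usedCost, Finset.mul_sum]
  rw [Finset.sum_comm]
  refine Finset.sum_le_sum fun e _ => ?_
  rw [← Finset.sum_filter, Finset.sum_const, nsmul_eq_mul]
  exact mul_le_mul_of_nonneg_right (hL.card_mem_prefix_le hT hload e) (hc e)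

end Coalescing

section Expansion

variable {V : Type} {E : Set (V × V)} {c ℓ : V × V → ℝ} {k h : ℕ}
  {c' ℓ' : (Fin (h + 1) × V) × (Fin (h + 1) × V) → ℝ}

/-- The bundle size `k^(1-i/h)` at level `i`: the multiplier of lengths in `upCost`, and the
number of terminals that share a route leaving level `i`. -/
noncomputable def bundleSize (k h i : ℕ) : ℝ :=
  (k : ℝ) ^ ((1 : ℝ) - i / (h : ℝ))

theorem bundleSize_zero (k h : ℕ) : bundleSize k h 0 = k := by
  simp [bundleSize]

theorem bundleSize_self (k : ℕ) (hh : h ≠ 0) : bundleSize k h h = 1 := by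
  have : (h : ℝ) ≠ 0 := Nat.cast_ne_zero.2 hh
  simp [bundleSize, this]

theorem bundleSize_pos (hk : 0 < k) (h i : ℕ) : 0 < bundleSize k h i :=
  Real.rpow_pos_of_pos (Nat.cast_pos.2 hk) _

theorem bundleSize_eq_mul_succ (hk : 0 < k) (h i : ℕ) :
    bundleSize k h i = (k : ℝ) ^ ((1 : ℝ) / h) * bundleSize k h (i + 1) := by
  rw [bundleSize, bundleSize, ← Real.rpow_add (Nat.cast_pos.2 hk)]
  congr 1
  push_cast
  ring

theorem ne_zero_of_bundleSize_lt_card {i : ℕ} {s : Finset (Fin k)} (hs : bundleSize k h i < #s) :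
    i ≠ 0 := by
  rintro rfl
  rw [bundleSize_zero, Nat.cast_lt] at hs
  exact hs.not_ge (card_finset_fin_le s)

theorem upCost_eq (c ℓ : V × V → ℝ) (k h : ℕ) (i : Fin (h + 1)) (w : List (V × V)) :
    upCost c ℓ k h i w = (w.map c).sum + bundleSize k h i * (w.map ℓ).sum := by
  simp only [upCost, bundleSize, List.sum_map_add, List.sum_map_mul_left]

namespace UpCostsValid

variable {i j : Fin (h + 1)} {u v : V}

theorem cost_le_upCost (hv : UpCostsValid E c ℓ k h c' ℓ') (hij : (j : ℕ) + 1 = i)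
    {p : List (V × V)} (hp : IsWalk E u v p) : c' ((i, u), (j, v)) ≤ upCost c ℓ k h i p := by
  obtain ⟨w, -, hleast, hcost, -⟩ := hv i j u v ⟨i, j, u, v, rfl, hij, p, hp⟩
  exact hcost ▸ hleast.2 ⟨p, hp, rfl⟩

theorem bundleSize_mul_length_le_cost (hv : UpCostsValid E c ℓ k h c' ℓ') (hc : ∀ e, 0 ≤ c e)
    (he : ((i, u), (j, v)) ∈ upEdges E h) :
    bundleSize k h i * ℓ' ((i, u), (j, v)) ≤ c' ((i, u), (j, v)) := by
  obtain ⟨w, -, -, hcost, hlength⟩ := hv i j u v he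
  rw [hcost, hlength, upCost_eq]
  exact le_add_of_nonneg_left (list_sum_map_nonneg hc w)

theorem cost_nonneg (hv : UpCostsValid E c ℓ k h c' ℓ') (hc : ∀ e, 0 ≤ c e)
    (hℓ : ∀ e, 0 ≤ ℓ e) (he : ((i, u), (j, v)) ∈ upEdges E h) : 0 ≤ c' ((i, u), (j, v)) := by
  obtain ⟨w, -, -, hcost, -⟩ := hv i j u v he
  rw [hcost, upCost_eq]
  have hsize : 0 ≤ bundleSize k h i := Real.rpow_nonneg k.cast_nonneg _
  exact add_nonneg (list_sum_map_nonneg hc w) (mul_nonneg hsize (list_sum_map_nonneg hℓ w))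

variable [DecidableEq V]

/-- The walk defining an expansion edge minimizes a combination of cost and length, so it may be
long; the factor `2` arises because its length is bounded only through its combined cost. -/
theorem bundleSize_mul_cost_add_length_le (hv : UpCostsValid E c ℓ k h c' ℓ') (hc : ∀ e, 0 ≤ c e)
    (hℓ : ∀ e, 0 ≤ ℓ e) (hij : (j : ℕ) + 1 = i) {n : ℕ} {a b : Fin n → V}
    {u : Fin n → List (V × V)} (hu : ∀ m, IsWalk E (a m) (b m) (u m))
    (hbundle : ∀ m, u m ≠ [] → bundleSize k h i ≤ #{m' | a m' = a m ∧ b m' = b m}) :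
    bundleSize k h i * (∑ x ∈ Finset.univ.image fun m => ((i, a m), (j, b m)), c' x +
        ∑ m, ℓ' ((i, a m), (j, b m))) ≤
      2 * (∑ m, ((u m).map c).sum + bundleSize k h i * totalLength ℓ u) := by
  have hedge : ∀ m, ((i, a m), (j, b m)) ∈ upEdges E h :=
    fun m => ⟨i, j, a m, b m, rfl, hij, u m, hu m⟩
  have hcost : ∑ m, c' ((i, a m), (j, b m)) ≤
      ∑ m, ((u m).map c).sum + bundleSize k h i * totalLength ℓ u := by
    rw [totalLength, Finset.mul_sum, ← Finset.sum_add_distrib]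
    exact Finset.sum_le_sum fun m _ =>
      (hv.cost_le_upCost hij (hu m)).trans_eq (upCost_eq c ℓ k h i (u m))
  have himage : bundleSize k h i *
      ∑ x ∈ Finset.univ.image fun m => ((i, a m), (j, b m)), c' x ≤
        ∑ m, c' ((i, a m), (j, b m)) := by
    refine mul_sum_image_le (fun m _ => hv.cost_nonneg hc hℓ (hedge m)) fun m _ hne => ?_
    have hum : u m ≠ [] := by
      intro hnil
      have hle := hv.cost_le_upCost hij (hu m)
      rw [hnil] at hle
      exact hne (le_antisymm (by simpa [upCost] using hle) (hv.cost_nonneg hc hℓ (hedge m)))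
    simpa using hbundle m hum
  have hlength : bundleSize k h i * ∑ m, ℓ' ((i, a m), (j, b m)) ≤
      ∑ m, c' ((i, a m), (j, b m)) := by
    rw [Finset.mul_sum]
    exact Finset.sum_le_sum fun m _ => hv.bundleSize_mul_length_le_cost hc (hedge m)
  linarith

theorem cost_add_length_le (hv : UpCostsValid E c ℓ k h c' ℓ') (hk : 0 < k) (hc : ∀ e, 0 ≤ c e)
    (hℓ : ∀ e, 0 ≤ ℓ e) (hij : (j : ℕ) + 1 = i) {n : ℕ} {a b : Fin n → V}
    {u : Fin n → List (V × V)} (hu : ∀ m, IsWalk E (a m) (b m) (u m))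
    (hbundle : ∀ m, u m ≠ [] → bundleSize k h i ≤ #{m' | a m' = a m ∧ b m' = b m}) {C : ℝ}
    (hC : ∑ m, ((u m).map c).sum ≤ bundleSize k h j * C) :
    ∑ x ∈ Finset.univ.image fun m => ((i, a m), (j, b m)), c' x + ∑ m, ℓ' ((i, a m), (j, b m)) ≤
      2 * ((k : ℝ) ^ ((1 : ℝ) / h) * C + totalLength ℓ u) := by
  refine le_of_mul_le_mul_left ?_ (bundleSize_pos hk h i)
  have hlevel := hv.bundleSize_mul_cost_add_length_le hc hℓ hij hu hbundle
  rw [bundleSize_eq_mul_succ hk, hij] at hC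
  linarith

end UpCostsValid

/-- The terminal `m` walks along `u m` from `a m` to `b m`, and `w m` is its remaining route. -/
theorem exists_level_step [DecidableEq V] {r : V} {a : Fin k → V} {L : Fin k → List (V × V)}
    (hL : Coalescing L) (hwalk : ∀ m, IsWalk E (a m) r (L m)) (hc : ∀ e, 0 ≤ c e)
    {T : ℝ} (hT : 0 ≤ T) :
    ∃ (b : Fin k → V) (u w : Fin k → List (V × V)), (∀ m, u m ++ w m = L m) ∧
      (∀ m, IsWalk E (a m) (b m) (u m)) ∧ (∀ m, IsWalk E (b m) r (w m)) ∧
      (∀ m, #{m' | L m' = L m} ≤ #{m' | a m' = a m ∧ b m' = b m}) ∧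
      (∀ m, w m ≠ [] → T < #{m' | w m' = w m}) ∧
      ∑ m, ((u m).map c).sum ≤ T * usedCost c L := by
  obtain ⟨F, hF, hbundle, hload⟩ := exists_bundling Finset.univ L hT
  choose u hu using fun m => hF (L m)
  choose b hub hbw using fun m => (hu m ▸ hwalk m).exists_of_append
  refine ⟨b, u, fun m => F (L m), hu, hub, hbw, fun m => ?_,
    fun m => hbundle m (Finset.mem_univ m), ?_⟩
  · refine Finset.card_le_card (Finset.monotone_filter_right _ fun m' _ h => ⟨?_, ?_⟩)
    · exact (hwalk m').source_eq (h ▸ hwalk m)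
    · exact (hbw m').source_eq (h ▸ hbw m)
  · have hsum : ∑ m, ((u m).map c).sum ≤ T * usedCost c fun m => u m ++ F (L m) := by
      refine Coalescing.sum_prefix_le ?_ hT ?_ hc
      · simpa only [hu] using hL
      · simpa only [hu] using hload
    simpa only [hu] using hsum

theorem exists_upward_routes [DecidableEq V] (hk : 0 < k) (hc : ∀ e, 0 ≤ c e)
    (hℓ : ∀ e, 0 ≤ ℓ e) (hv : UpCostsValid E c ℓ k h c' ℓ') {r : V} (i : Fin (h + 1))
    {a : Fin k → V} {L : Fin k → List (V × V)} (hL : Coalescing L)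
    (hwalk : ∀ m, IsWalk E (a m) r (L m))
    (hbundle : ∀ m, L m ≠ [] → i ≠ 0 ∧ bundleSize k h i ≤ #{m' | L m' = L m}) :
    ∃ Q : Fin k → List ((Fin (h + 1) × V) × (Fin (h + 1) × V)),
      (∀ m, IsWalk (upEdges E h) (i, a m) ((0 : Fin (h + 1)), r) (Q m)) ∧
      objVal c' ℓ' Q ≤
        2 * ((i : ℕ) * (k : ℝ) ^ ((1 : ℝ) / h) * usedCost c L + totalLength ℓ L) := by
  induction i using Fin.induction generalizing a L with
  | zero =>
    have hnil : ∀ m, L m = [] := fun m => of_not_not fun hm => (hbundle m hm).1 rfl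
    refine ⟨fun _ => [], fun m => ?_, ?_⟩
    · have hm := hwalk m
      rw [hnil m] at hm
      exact congrArg (Prod.mk 0) hm
    · simpa [objVal_nil] using totalLength_nonneg hℓ L
  | succ i ih =>
    obtain ⟨b, u, w, huw, hu, hw, hab, hwT, hcost⟩ :=
      exists_level_step hL hwalk hc (bundleSize_pos hk h i).le
    have hwL : ∀ m, w m <:+ L m := fun m => ⟨u m, huw m⟩
    have hwbundle : ∀ m, w m ≠ [] →
        i.castSucc ≠ 0 ∧ bundleSize k h i.castSucc ≤ #{m' | w m' = w m} := fun m hm =>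
      ⟨mt (congrArg Fin.val) (ne_zero_of_bundleSize_lt_card (hwT m hm)), (hwT m hm).le⟩
    obtain ⟨Q, hQ, hQval⟩ := ih (hL.of_suffix hwL) hw hwbundle
    have hedge : ∀ m, ((i.succ, a m), (i.castSucc, b m)) ∈ upEdges E h :=
      fun m => ⟨_, _, _, _, rfl, rfl, u m, hu m⟩
    refine ⟨fun m => ((i.succ, a m), (i.castSucc, b m)) :: Q m,
      fun m => ⟨rfl, hedge m, hQ m⟩, ?_⟩
    have hubundle : ∀ m, u m ≠ [] →
        bundleSize k h i.succ ≤ #{m' | a m' = a m ∧ b m' = b m} := fun m hm =>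
      (hbundle m fun hnil => hm (List.append_eq_nil_iff.1 ((huw m).trans hnil)).1).2.trans
        (Nat.cast_le.2 (hab m))
    have hlevel :=
      hv.cost_add_length_le (i := i.succ) (j := i.castSucc) hk hc hℓ rfl hu hubundle hcost
    have hobj := objVal_cons_le ℓ' (fun m => hv.cost_nonneg hc hℓ (hedge m)) Q
    have hrest : (i : ℕ) * (k : ℝ) ^ ((1 : ℝ) / h) * usedCost c w ≤
        (i : ℕ) * (k : ℝ) ^ ((1 : ℝ) / h) * usedCost c L := by
      gcongr
      exact usedCost_mono hc fun m e he => ⟨m, (hwL m).mem he⟩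
    have hsplit : totalLength ℓ L = totalLength ℓ u + totalLength ℓ w := by
      rw [← totalLength_append, funext huw]
    rw [Fin.val_castSucc] at hQval
    rw [Fin.val_succ, Nat.cast_succ]
    linarith

end Expansion

theorem exists_coalescing_routes_le {V : Type} [DecidableEq V] {E : Set (V × V)}
    {c ℓ : V × V → ℝ} (hc : ∀ e, 0 ≤ c e) (hℓ : ∀ e, 0 ≤ ℓ e) {k : ℕ} {x : Fin k → V} {r : V}
    {P : Fin k → List (V × V)} (hP : ∀ m, IsWalk E (x m) r (P m)) :
    ∃ L : Fin k → List (V × V), Coalescing L ∧ (∀ m, IsWalk E (x m) r (L m)) ∧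
      usedCost c L ≤ usedCost c P ∧ totalLength ℓ L ≤ totalLength ℓ P := by
  have hfin : {e | ∃ m, e ∈ P m}.Finite :=
    (Set.finite_iUnion fun m => (P m).finite_toSet).subset fun e he => Set.mem_iUnion.2 he
  obtain ⟨L, hL, hwalk, hlength⟩ := exists_coalescing_shortest_walks hfin hℓ
    fun m => (hP m).of_subset fun e he => ⟨m, he⟩
  refine ⟨L, hL, fun m => (hwalk m).of_subset fun e he => ?_,
    usedCost_mono hc fun m e => (hwalk m).mem, Finset.sum_le_sum fun m _ => hlength m⟩
  obtain ⟨j, hj⟩ := (hwalk m).mem he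
  exact (hP j).mem hj

theorem layered_single_sink_upper_bound_general {V : Type} [DecidableEq V] {E : Set (V × V)}
    {c ℓ : V × V → ℝ} (hc : ∀ e, 0 ≤ c e) (hℓ : ∀ e, 0 ≤ ℓ e) {k h : ℕ} (hk : 1 ≤ k)
    (hh : 1 ≤ h) {x : Fin k → V} {r : V}
    {c' ℓ' : (Fin (h + 1) × V) × (Fin (h + 1) × V) → ℝ} (hv : UpCostsValid E c ℓ k h c' ℓ')
    {P : Fin k → List (V × V)} (hP : ∀ m, IsWalk E (x m) r (P m)) :
    ∃ P' : Fin k → List ((Fin (h + 1) × V) × (Fin (h + 1) × V)),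
      (∀ m, IsWalk (upEdges E h) (Fin.last h, x m) ((0 : Fin (h + 1)), r) (P' m)) ∧
      objVal c' ℓ' P' ≤ 2 * h * (k : ℝ) ^ ((1 : ℝ) / h) * objVal c ℓ P := by
  obtain ⟨L, hL, hwalk, hcost, hlength⟩ := exists_coalescing_routes_le hc hℓ hP
  have hbundle : ∀ m, L m ≠ [] →
      Fin.last h ≠ 0 ∧ bundleSize k h (Fin.last h) ≤ #{m' | L m' = L m} := by
    intro m _
    refine ⟨mt (congrArg Fin.val) (Nat.one_le_iff_ne_zero.1 hh), ?_⟩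
    rw [Fin.val_last, bundleSize_self k (Nat.one_le_iff_ne_zero.1 hh), Nat.one_le_cast]
    exact Finset.card_pos.2 ⟨m, by simp⟩
  obtain ⟨P', hP', hval⟩ := exists_upward_routes hk hc hℓ hv (Fin.last h) hL hwalk hbundle
  refine ⟨P', hP', hval.trans ?_⟩
  have hfactor : 1 ≤ h * (k : ℝ) ^ ((1 : ℝ) / h) :=
    one_le_mul_of_one_le_of_one_le (Nat.one_le_cast.2 hh)
      (Real.one_le_rpow (Nat.one_le_cast.2 hk) (by positivity))
  rw [Fin.val_last]
  calc 2 * (h * (k : ℝ) ^ ((1 : ℝ) / h) * usedCost c L + totalLength ℓ L)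
      ≤ 2 * (h * (k : ℝ) ^ ((1 : ℝ) / h) * usedCost c P +
          h * (k : ℝ) ^ ((1 : ℝ) / h) * totalLength ℓ P) := by
        gcongr
        exact hlength.trans (le_mul_of_one_le_left (totalLength_nonneg hℓ P) hfactor)
    _ = 2 * h * (k : ℝ) ^ ((1 : ℝ) / h) * (usedCost c P + totalLength ℓ P) := by ring

/-- **Pushing a single-sink solution up to the layered expansion.**  There is an
absolute constant `C` such that for every single-sink instance `(G,X,r)` with
`k = |X| ≥ 1` terminals and every `h ≥ 1`: every feasible solution of objective value
`φ` in `G` yields a feasible solution of the single-sink instance on `G^up`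
(connecting the level-`h` copies of the terminals to the level-`0` copy of `r`) of
objective value at most `C·h·k^(1/h)·φ`. -/
theorem layered_single_sink_upper_bound :
    ∃ C : ℝ, 0 < C ∧
      ∀ (V : Type) [Fintype V] [DecidableEq V],
        ∀ (E : Set (V × V)) (c ℓ : V × V → ℝ),
        (∀ e, 0 ≤ c e) → (∀ e, 0 ≤ ℓ e) →
        ∀ (X : List V) (r : V) (k h : ℕ), k = X.length → 1 ≤ k → 1 ≤ h →
        ∀ (c' ℓ' : (Fin (h + 1) × V) × (Fin (h + 1) × V) → ℝ),
        UpCostsValid E c ℓ k h c' ℓ' →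
        ∀ P : Fin X.length → List (V × V),
          (∀ m, IsWalk E (X.get m) r (P m)) →
          ∃ P' : Fin X.length → List ((Fin (h + 1) × V) × (Fin (h + 1) × V)),
            (∀ m, IsWalk (upEdges E h) (Fin.last h, X.get m) ((0 : Fin (h + 1)), r) (P' m)) ∧
            objVal c' ℓ' P' ≤ C * h * (k : ℝ) ^ ((1 : ℝ) / h) * objVal c ℓ P :=
  ⟨2, two_pos, fun _ _ _ _ _ _ hc hℓ _ _ _ _ hkX hk hh _ _ hv _ hP => by
    subst hkX; exact layered_single_sink_upper_bound_general hc hℓ hk hh hv hP⟩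

end BaB
end

section
/- Let c > 0, let 0 < a ≤ b, let T ≥ 0, and let x : [0,T] → ℝ be nondecreasing and differentiable with x(0) ≥ a and x(T) ≤ b. Let S ⊆ [0,T] be a Lebesgue-measurable set such that x′(t) ≥ x(t)/c for every t ∈ S. Then the Lebesgue measure of S is at most c·ln(b/a). -/
/-!
At the points of `S` the function `log ∘ x` has derivative `x' / x ≥ 1 / c`, and it is monotone, so
it stretches lengths by a factor at least `1 / c`: the measure of `S` is at most `c` times that of
`log (x '' S) ⊆ [log a, log b]`.

The stretching estimate reduces to measurable sets. Extend the function monotonically to `ℝ`; by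
Lebesgue's theorem the extension is differentiable almost everywhere, and at almost every point of
`S` its derivative is the one along `S`. So up to a null set `S` lies in a measurable set where the
extension has derivative at least `1 / c`, and the change of variables formula applies there.
-/

open MeasureTheory Set

section Stretching

variable {f f' : ℝ → ℝ} {s : Set ℝ} {k : ℝ}

theorem ae_uniqueDiffWithinAt_of_mem (s : Set ℝ) :
    ∀ᵐ t : ℝ, t ∈ s → UniqueDiffWithinAt ℝ s t := by
  filter_upwards [(countable_setOfPred_isolated_right_within (s := s)).ae_notMem volume]
    with t ht hts
  rw [uniqueDiffWithinAt_iff_accPt, accPt_principal_iff_nhdsWithin, Filter.neBot_iff]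
  intro isolated
  have subset_diff : s ∩ Ioi t ⊆ s \ {t} := fun u hu ↦ ⟨hu.1, ne_of_gt hu.2⟩
  exact ht ⟨hts, eq_bot_mono (nhdsWithin_mono t subset_diff) isolated⟩

theorem ofReal_mul_volume_le_volume_image_of_measurableSet (hs : MeasurableSet s)
    (hf : MonotoneOn f s) (hf' : ∀ t ∈ s, HasDerivWithinAt f (f' t) s t)
    (hk : ∀ t ∈ s, k ≤ f' t) :
    ENNReal.ofReal k * volume s ≤ volume (f '' s) :=
  calc ENNReal.ofReal k * volume s = ∫⁻ _ in s, ENNReal.ofReal k := (setLIntegral_const s _).symm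
    _ ≤ ∫⁻ t in s, ENNReal.ofReal (f' t) :=
      setLIntegral_mono' hs fun t ht ↦ ENNReal.ofReal_le_ofReal (hk t ht)
    _ = volume (f '' s) := lintegral_deriv_eq_volume_image_of_monotoneOn hs hf' hf

theorem ofReal_mul_volume_le_volume_image_of_monotone (hf : Monotone f)
    (hf' : ∀ t ∈ s, HasDerivWithinAt f (f' t) s t) (hk : ∀ t ∈ s, k ≤ f' t) :
    ENNReal.ofReal k * volume s ≤ volume (f '' s) := by
  set hull := toMeasurable volume (f '' s)
  set steep := {t | DifferentiableAt ℝ f t} ∩ {t | k ≤ deriv f t} ∩ f ⁻¹' hull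
  have measurableSet_steep : MeasurableSet steep :=
    ((measurableSet_of_differentiableAt ℝ f).inter
      (measurableSet_le measurable_const (measurable_deriv f))).inter
      (hf.measurable (measurableSet_toMeasurable _ _))
  have ae_mem_steep : s ≤ᵐ[volume] steep := by
    filter_upwards [hf.ae_differentiableAt, ae_uniqueDiffWithinAt_of_mem s] with t hdiff hunique ht
    have deriv_eq : deriv f t = f' t :=
      (hunique ht).eq_deriv s hdiff.hasDerivAt.hasDerivWithinAt (hf' t ht)
    exact ⟨⟨hdiff, (hk t ht).trans_eq deriv_eq.symm⟩,
      subset_toMeasurable volume _ (mem_image_of_mem f ht)⟩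
  calc ENNReal.ofReal k * volume s ≤ ENNReal.ofReal k * volume steep := by
        gcongr 1
        exact measure_mono_ae ae_mem_steep
    _ ≤ volume (f '' steep) :=
      ofReal_mul_volume_le_volume_image_of_measurableSet measurableSet_steep (hf.monotoneOn steep)
        (fun t ht ↦ ht.1.1.hasDerivAt.hasDerivWithinAt) (fun t ht ↦ ht.1.2)
    _ ≤ volume hull := measure_mono (image_subset_iff.2 inter_subset_right)
    _ = volume (f '' s) := measure_toMeasurable _

theorem ofReal_mul_volume_le_volume_image_of_monotoneOn (hf : MonotoneOn f s)
    (hbelow : BddBelow (f '' s)) (habove : BddAbove (f '' s))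
    (hf' : ∀ t ∈ s, HasDerivWithinAt f (f' t) s t) (hk : ∀ t ∈ s, k ≤ f' t) :
    ENNReal.ofReal k * volume s ≤ volume (f '' s) := by
  obtain ⟨g, hg, hfg⟩ := hf.exists_monotone_extension hbelow habove
  rw [hfg.image_eq]
  exact ofReal_mul_volume_le_volume_image_of_monotone hg
    (fun t ht ↦ (hf' t ht).congr_of_mem hfg.symm ht) hk

end Stretching

theorem charging_clock_bound_general {c a b : ℝ} (hc : 0 < c) (ha : 0 < a) {x x' : ℝ → ℝ}
    {S : Set ℝ} (hmono : MonotoneOn x S) (hx : MapsTo x S (Icc a b))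
    (hderiv : ∀ t ∈ S, HasDerivWithinAt x (x' t) S t) (hrate : ∀ t ∈ S, x t / c ≤ x' t) :
    volume S ≤ ENNReal.ofReal (c * Real.log (b / a)) := by
  obtain rfl | ⟨t₀, ht₀⟩ := S.eq_empty_or_nonempty
  · simp only [measure_empty, zero_le]
  have hb : 0 < b := ha.trans_le ((hx ht₀).1.trans (hx ht₀).2)
  have hpos : ∀ t ∈ S, 0 < x t := fun t ht ↦ ha.trans_le (hx ht).1
  have log_mono : MonotoneOn (fun t ↦ Real.log (x t)) S :=
    fun s hs t ht hst ↦ Real.log_le_log (hpos s hs) (hmono hs ht hst)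
  have log_image : (fun t ↦ Real.log (x t)) '' S ⊆ Icc (Real.log a) (Real.log b) :=
    image_subset_iff.2 fun t ht ↦
      ⟨Real.log_le_log ha (hx ht).1, Real.log_le_log (hpos t ht) (hx ht).2⟩
  have log_rate : ∀ t ∈ S, c⁻¹ ≤ x' t / x t := fun t ht ↦ by
    rw [le_div_iff₀ (hpos t ht), inv_mul_eq_div]
    exact hrate t ht
  have stretch : ENNReal.ofReal c⁻¹ * volume S ≤ ENNReal.ofReal (Real.log (b / a)) :=
    calc ENNReal.ofReal c⁻¹ * volume S ≤ volume ((fun t ↦ Real.log (x t)) '' S) :=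
          ofReal_mul_volume_le_volume_image_of_monotoneOn log_mono (bddBelow_Icc.mono log_image)
            (bddAbove_Icc.mono log_image) (fun t ht ↦ (hderiv t ht).log (hpos t ht).ne') log_rate
      _ ≤ volume (Icc (Real.log a) (Real.log b)) := measure_mono log_image
      _ = ENNReal.ofReal (Real.log (b / a)) := by
        rw [Real.volume_Icc, Real.log_div hb.ne' ha.ne']
  rwa [ENNReal.ofReal_inv_of_pos hc, ENNReal.inv_mul_le_iff (ENNReal.ofReal_pos.2 hc).ne'
    ENNReal.ofReal_ne_top, ← ENNReal.ofReal_mul hc.le] at stretch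

/-- **Charging-clock bound.**  Let `0 < c`, `0 < a ≤ b`, `T ≥ 0`, and let
`x : [0,T] → ℝ` be nondecreasing and differentiable with `x 0 ≥ a` and `x T ≤ b`.
If `S ⊆ [0,T]` is a measurable set on which `x` grows at instantaneous rate at least
`x t / c`, then the Lebesgue measure of `S` is at most `c · ln (b / a)`. -/
theorem charging_clock_bound (c : ℝ) (hc : 0 < c) (a b : ℝ) (ha : 0 < a) (hab : a ≤ b)
    (T : ℝ) (hT : 0 ≤ T) (x : ℝ → ℝ)
    (hmono : MonotoneOn x (Set.Icc 0 T))
    (hdiff : ∀ t ∈ Set.Icc 0 T, DifferentiableAt ℝ x t)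
    (hx0 : a ≤ x 0) (hxT : x T ≤ b)
    (S : Set ℝ) (hS : S ⊆ Set.Icc 0 T) (hSm : MeasurableSet S)
    (hrate : ∀ t ∈ S, x t / c ≤ deriv x t) :
    MeasureTheory.volume S ≤ ENNReal.ofReal (c * Real.log (b / a)) := by
  exact charging_clock_bound_general hc ha (hmono.mono hS)
    (fun t ht ↦ ⟨hx0.trans (hmono (left_mem_Icc.2 hT) (hS ht) (hS ht).1),
      (hmono (hS ht) (right_mem_Icc.2 hT) (hS ht).2).trans hxT⟩)
    (fun t ht ↦ (hdiff t (hS ht)).hasDerivAt.hasDerivWithinAt) hrate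
end

section
/- Let n ≥ 2 and let (x, f, z) be a feasible solution of the composite LP (MC-BaB LP) of objective value Φ, on an instance with n vertices. For each level-0 root copy r, draw τ_r independently and uniformly at random from the interval [1/n^5, 1/(6 ln n)], and define the scaled solution x̃^r_e = min(1, x^r_e/τ_r), f̃^r_{(e,s_i)} = min(1, f^r_{(e,s_i)}/τ_r), f̃^r_{(e,t_i)} = min(1, f^r_{(e,t_i)}/τ_r), and z̃_{ir} = 1 if z_{ir} ≥ τ_r and z̃_{ir} = 0 otherwise. Then there is an absolute constant C such that: (i) deterministically, for every root r and every pair i with z̃_{ir} = 1, the edge capacities {f̃^r_{(e,s_i)}}_e admit a flow of value 1 from the copy of s_i to r in G^up, the capacities {f̃^r_{(e,t_i)}}_e admit a flow of value 1 from r to the copy of t_i in G^down, and f̃^r_{(e,s_i)} ≤ x̃^r_e and f̃^r_{(e,t_i)} ≤ x̃^r_e for all e; (ii) the expected value of Σ_r Σ_e c_e x̃^r_e + Σ_i Σ_r Σ_e ℓ_e (f̃^r_{(e,s_i)} + f̃^r_{(e,t_i)}) is at most C·(ln n)²·Φ; and (iii) for every pair i, with probability at least 1 − 1/n³ there exists a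 root r with z̃_{ir} = 1. -/
namespace BaB

open MeasureTheory

/-- The uniform probability measure on the interval `[l, u]`. -/
noncomputable def unifIcc (l u : ℝ) : Measure ℝ :=
  (ENNReal.ofReal (u - l))⁻¹ • (volume.restrict (Set.Icc l u))

/-- Independent uniform thresholds `τ_r ∈ [l, u]`, one for each root `r`. -/
noncomputable def prodUnif (V : Type) [Fintype V] (l u : ℝ) : Measure (V → ℝ) :=
  Measure.pi fun _ => unifIcc l u

/-!
Dividing the flow of value `z i r` by `z i r` gives a unit flow. It is below `1` on every edge,
since in an acyclic network no edge carries more than the flow value, and it is below `f / τ r`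
because `τ r ≤ z i r`.

For the cost, `min 1 (y / τ) ≤ y / τ`, and for `τ` uniform on `[l, u]` the mean of `1 / τ` is
`log (u / l) / (u - l)`, which is `O((log n) ^ 2)` for the chosen interval.

A pair with root fractions `z r` stays unassigned with probability `∏ P(τ r > z r)`. As
`P(τ r > z r) ≤ exp (-(z r - l) / (u - l))`, this is at most `exp (-3 log n)`, because
`u - l < 1 / (6 log n)` and `∑ (z r - l) ≥ 1 - n l ≥ 1 / 2`.
-/

section Flow

/-- The digraph with edge set `E` has no directed cycle (loops included). This is what the layered
expansions need to satisfy for an edge to carry at most the value of a flow. -/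
def IsAcyclic {W : Type*} (E : Set (W × W)) : Prop :=
  ∀ a, ¬ Relation.TransGen (fun u v => (u, v) ∈ E) a a

lemma isAcyclic_of_rank {W α : Type*} [Preorder α] {E : Set (W × W)} (rank : W → α)
    (h : ∀ a b, (a, b) ∈ E → rank a < rank b) : IsAcyclic E := by
  intro a ha
  have hlt : Relation.TransGen (· < ·) (rank a) (rank a) := ha.lift rank h
  rw [Relation.transGen_eq_self] at hlt
  exact lt_irrefl _ hlt

lemma isAcyclic_upEdges {V : Type} (E : Set (V × V)) (h : ℕ) : IsAcyclic (upEdges E h) := by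
  refine isAcyclic_of_rank (fun a => OrderDual.toDual a.1) ?_
  rintro _ _ ⟨i, j, u, v, ⟨⟩, hij, -⟩
  exact Fin.lt_def.2 (Nat.lt_of_succ_le hij.le)

lemma isAcyclic_downEdges {V : Type} (E : Set (V × V)) (h : ℕ) : IsAcyclic (downEdges E h) := by
  refine isAcyclic_of_rank Prod.fst ?_
  rintro _ _ ⟨i, j, u, v, ⟨⟩, hij, -⟩
  exact Fin.lt_def.2 (Nat.lt_of_succ_le hij.le)

variable {W : Type} [Fintype W] {E : Set (W × W)} {g : W × W → ℝ} {s r : W} {v t : ℝ}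

lemma IsFlow.sink_netOutflow (hg : IsFlow E g s r v) (hsr : s ≠ r) :
    ∑ w, g (r, w) - ∑ w, g (w, r) = -v := by
  obtain ⟨-, -, hcons, hval⟩ := hg
  have total : ∑ u, (∑ w, g (u, w) - ∑ w, g (w, u)) = 0 := by
    rw [Finset.sum_sub_distrib, Finset.sum_comm, sub_self]
  rw [Fintype.sum_eq_add s r hsr fun u hu => sub_eq_zero.2 (hcons u hu.1 hu.2).symm] at total
  linarith

lemma IsFlow.netOutflow_le (hg : IsFlow E g s r v) (hv : 0 ≤ v) (S : Finset W) :
    ∑ u ∈ S, (∑ w, g (u, w) - ∑ w, g (w, u)) ≤ v := by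
  classical
  calc ∑ u ∈ S, (∑ w, g (u, w) - ∑ w, g (w, u))
      ≤ ∑ u ∈ S, if u = s then v else 0 := by
        refine Finset.sum_le_sum fun u _ => ?_
        split_ifs with hus
        · exact hus ▸ hg.2.2.2.le
        · by_cases hur : u = r
          · subst hur
            exact (hg.sink_netOutflow (Ne.symm hus)).trans_le (neg_nonpos.2 hv)
          · exact (sub_eq_zero.2 (hg.2.2.1 u hus hur).symm).le
    _ ≤ v := by
        rw [Finset.sum_ite_eq']
        split_ifs <;> simp [hv]

lemma IsFlow.sum_cut_le [DecidableEq W] (hg : IsFlow E g s r v) (hv : 0 ≤ v) {S : Finset W}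
    (hS : ∀ a b, (a, b) ∈ E → b ∈ S → a ∈ S) : ∑ u ∈ S, ∑ w ∈ Sᶜ, g (u, w) ≤ v := by
  have inflow : ∑ u ∈ S, ∑ w, g (w, u) = ∑ u ∈ S, ∑ w ∈ S, g (u, w) := by
    rw [Finset.sum_comm (s := S) (t := S)]
    refine Finset.sum_congr rfl fun u hu => (Finset.sum_subset S.subset_univ fun w _ hw => ?_).symm
    exact hg.2.1 _ fun hwu => hw (hS w u hwu hu)
  have outflow : ∑ u ∈ S, ∑ w, g (u, w)
      = ∑ u ∈ S, ∑ w ∈ S, g (u, w) + ∑ u ∈ S, ∑ w ∈ Sᶜ, g (u, w) := by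
    simp only [← Finset.sum_add_distrib, Finset.sum_add_sum_compl]
  have net := hg.netOutflow_le hv S
  rw [Finset.sum_sub_distrib] at net
  linarith

/- The edge `(a, b)` leaves the set of vertices from which `a` can be reached; no edge enters this
set, so all that leaves it is net outflow. -/
lemma IsFlow.le_value (hg : IsFlow E g s r v) (hE : IsAcyclic E) (hv : 0 ≤ v) (e : W × W) :
    g e ≤ v := by
  classical
  obtain ⟨a, b⟩ := e
  by_cases hab : (a, b) ∈ E
  · let S := Finset.univ.filter fun w => Relation.ReflTransGen (fun u v => (u, v) ∈ E) w a
    have ha : a ∈ S := Finset.mem_filter.2 ⟨Finset.mem_univ a, .refl⟩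
    have hb : b ∈ Sᶜ := by
      simp only [S, Finset.mem_compl, Finset.mem_filter, Finset.mem_univ, true_and]
      exact fun hba => hE a (.head' hab hba)
    have hS : ∀ u w, (u, w) ∈ E → w ∈ S → u ∈ S := by
      simp only [S, Finset.mem_filter, Finset.mem_univ, true_and]
      exact fun u w huw hwa => hwa.head huw
    calc g (a, b) ≤ ∑ w ∈ Sᶜ, g (a, w) :=
          Finset.single_le_sum (f := fun w => g (a, w)) (fun w _ => hg.1 (a, w)) hb
      _ ≤ ∑ u ∈ S, ∑ w ∈ Sᶜ, g (u, w) :=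
          Finset.single_le_sum (f := fun u => ∑ w ∈ Sᶜ, g (u, w))
            (fun u _ => Finset.sum_nonneg fun w _ => hg.1 (u, w)) ha
      _ ≤ v := hg.sum_cut_le hv hS
  · exact (hg.2.1 _ hab).trans_le hv

lemma IsFlow.div_value (hg : IsFlow E g s r v) (hv : 0 < v) :
    IsFlow E (fun e => g e / v) s r 1 := by
  obtain ⟨h_nonneg, h_supp, hcons, hval⟩ := hg
  refine ⟨fun e => div_nonneg (h_nonneg e) hv.le,
    fun e he => div_eq_zero_iff.2 (.inl (h_supp e he)), fun u hus hur => ?_, ?_⟩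
  · rw [← Finset.sum_div, ← Finset.sum_div, hcons u hus hur]
  · rw [← Finset.sum_div, ← Finset.sum_div, ← sub_div, hval, div_self hv.ne']

lemma IsFlow.exists_unit_le_min_div (hg : IsFlow E g s r v) (hE : IsAcyclic E) (ht : 0 < t)
    (htv : t ≤ v) : ∃ g', IsFlow E g' s r 1 ∧ ∀ e, g' e ≤ min 1 (g e / t) := by
  have hv : 0 < v := ht.trans_le htv
  exact ⟨_, hg.div_value hv, fun e => le_min ((div_le_one hv).2 (hg.le_value hE hv.le e))
    (div_le_div_of_nonneg_left (hg.1 e) ht htv)⟩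

end Flow

section Objective

variable {R ι α : Type*}

/-- The values `x r e` after dividing by the threshold `τ r` of the root and truncating at `1`. -/
noncomputable def capScale (τ : R → ℝ) (x : R → α → ℝ) : R → α → ℝ :=
  fun r e => min 1 (x r e / τ r)

variable {τ : R → ℝ} {x y : R → α → ℝ} {r : R}

lemma capScale_nonneg (hτ : 0 ≤ τ r) (hx : 0 ≤ x r) : 0 ≤ capScale τ x r :=
  fun e => le_min zero_le_one (div_nonneg (hx e) hτ)

lemma capScale_mono (hτ : 0 ≤ τ r) (hxy : x r ≤ y r) : capScale τ x r ≤ capScale τ y r :=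
  fun e => min_le_min_left 1 (div_le_div_of_nonneg_right (hxy e) hτ)

lemma capScale_le_inv_smul (τ : R → ℝ) (x : R → α → ℝ) (r : R) :
    capScale τ x r ≤ (τ r)⁻¹ • x r :=
  fun _ => (min_le_right _ _).trans_eq (div_eq_inv_mul _ _)

variable [Fintype R] [Fintype ι] [Fintype α]

/-- The contribution of a single root to the composite objective: `xu`, `xd` are its capacities in
`G^up` and `G^down`, and `fs i`, `ft i` the flows of the pair `i` through it. -/
def rootCost (c' ℓ' c'' ℓ'' xu xd : α → ℝ) (fs ft : ι → α → ℝ) : ℝ :=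
  ∑ e, (c' e * xu e + c'' e * xd e) + ∑ i, ∑ e, (ℓ' e * fs i e + ℓ'' e * ft i e)

/-- The objective of the composite LP; primed data belong to `G^up`, doubly primed data to
`G^down`. -/
def compositeObj (c' ℓ' c'' ℓ'' : α → ℝ) (xu xd : R → α → ℝ) (fs ft : ι → R → α → ℝ) : ℝ :=
  (∑ r, ∑ e, (c' e * xu r e + c'' e * xd r e)) +
    ∑ i, ∑ r, ∑ e, (ℓ' e * fs i r e + ℓ'' e * ft i r e)

variable {c' ℓ' c'' ℓ'' : α → ℝ}

lemma compositeObj_eq_sum_rootCost (c' ℓ' c'' ℓ'' : α → ℝ) (xu xd : R → α → ℝ)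
    (fs ft : ι → R → α → ℝ) :
    compositeObj c' ℓ' c'' ℓ'' xu xd fs ft =
      ∑ r, rootCost c' ℓ' c'' ℓ'' (xu r) (xd r) (fun i => fs i r) (fun i => ft i r) := by
  simp only [compositeObj, rootCost, Finset.sum_add_distrib (s := (Finset.univ : Finset R))]
  rw [Finset.sum_comm (s := (Finset.univ : Finset ι))]

lemma rootCost_mono (hc' : 0 ≤ c') (hℓ' : 0 ≤ ℓ') (hc'' : 0 ≤ c'') (hℓ'' : 0 ≤ ℓ'')
    {xu xd xu₂ xd₂ : α → ℝ} {fs ft fs₂ ft₂ : ι → α → ℝ} (hxu : xu ≤ xu₂) (hxd : xd ≤ xd₂)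
    (hfs : fs ≤ fs₂) (hft : ft ≤ ft₂) :
    rootCost c' ℓ' c'' ℓ'' xu xd fs ft ≤ rootCost c' ℓ' c'' ℓ'' xu₂ xd₂ fs₂ ft₂ := by
  unfold rootCost
  gcongr with e _ i _ e _
  exacts [hc' e, hxu e, hc'' e, hxd e, hℓ' e, hfs i e, hℓ'' e, hft i e]

lemma rootCost_smul (c' ℓ' c'' ℓ'' xu xd : α → ℝ) (fs ft : ι → α → ℝ) (a : ℝ) :
    rootCost c' ℓ' c'' ℓ'' (a • xu) (a • xd) (a • fs) (a • ft) =
      a * rootCost c' ℓ' c'' ℓ'' xu xd fs ft := by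
  simp only [rootCost, Pi.smul_apply, smul_eq_mul, mul_left_comm _ a, ← mul_add, ← Finset.mul_sum]

lemma rootCost_nonneg (hc' : 0 ≤ c') (hℓ' : 0 ≤ ℓ') (hc'' : 0 ≤ c'') (hℓ'' : 0 ≤ ℓ'')
    {xu xd : α → ℝ} {fs ft : ι → α → ℝ} (hxu : 0 ≤ xu) (hxd : 0 ≤ xd) (hfs : 0 ≤ fs)
    (hft : 0 ≤ ft) : 0 ≤ rootCost c' ℓ' c'' ℓ'' xu xd fs ft := by
  simpa [rootCost] using rootCost_mono hc' hℓ' hc'' hℓ'' hxu hxd hfs hft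

lemma compositeObj_nonneg (hc' : 0 ≤ c') (hℓ' : 0 ≤ ℓ') (hc'' : 0 ≤ c'') (hℓ'' : 0 ≤ ℓ'')
    {xu xd : R → α → ℝ} {fs ft : ι → R → α → ℝ} (hxu : 0 ≤ xu) (hxd : 0 ≤ xd) (hfs : 0 ≤ fs)
    (hft : 0 ≤ ft) : 0 ≤ compositeObj c' ℓ' c'' ℓ'' xu xd fs ft := by
  rw [compositeObj_eq_sum_rootCost]
  exact Finset.sum_nonneg fun r _ => rootCost_nonneg hc' hℓ' hc'' hℓ'' (hxu r) (hxd r)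
    (fun i => hfs i r) (fun i => hft i r)

lemma compositeObj_capScale_le (hc' : 0 ≤ c') (hℓ' : 0 ≤ ℓ') (hc'' : 0 ≤ c'') (hℓ'' : 0 ≤ ℓ'')
    (τ : R → ℝ) (xu xd : R → α → ℝ) (fs ft : ι → R → α → ℝ) :
    compositeObj c' ℓ' c'' ℓ'' (capScale τ xu) (capScale τ xd) (fun i => capScale τ (fs i))
        (fun i => capScale τ (ft i)) ≤
      ∑ r, (τ r)⁻¹ *
        rootCost c' ℓ' c'' ℓ'' (xu r) (xd r) (fun i => fs i r) (fun i => ft i r) := by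
  rw [compositeObj_eq_sum_rootCost]
  refine Finset.sum_le_sum fun r _ => ?_
  rw [← rootCost_smul]
  exact rootCost_mono hc' hℓ' hc'' hℓ'' (capScale_le_inv_smul τ xu r)
    (capScale_le_inv_smul τ xd r) (fun i => capScale_le_inv_smul τ (fs i) r)
    (fun i => capScale_le_inv_smul τ (ft i) r)

end Objective

section UniformThresholds

variable {l u : ℝ}

lemma unifIcc_eq_cond (l u : ℝ) : unifIcc l u = ProbabilityTheory.cond volume (Set.Icc l u) := by
  rw [unifIcc, ProbabilityTheory.cond, Real.volume_Icc]

lemma isProbabilityMeasure_unifIcc (hlu : l < u) : IsProbabilityMeasure (unifIcc l u) := by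
  rw [unifIcc_eq_cond]
  exact ProbabilityTheory.cond_isProbabilityMeasure_of_finite (by simpa using hlu) (by simp)

lemma ae_unifIcc_mem (l u : ℝ) : ∀ᵐ t ∂unifIcc l u, t ∈ Set.Icc l u := by
  rw [unifIcc_eq_cond]
  exact ProbabilityTheory.ae_cond_mem measurableSet_Icc

lemma unifIcc_Ioi_le (hlu : l < u) (z : ℝ) :
    unifIcc l u (Set.Ioi z) ≤ ENNReal.ofReal (Real.exp (-((z - l) / (u - l)))) := by
  have hd : 0 < u - l := sub_pos.2 hlu
  have hsub : Set.Icc l u ∩ Set.Ioi z ⊆ Set.Icc z u := fun t ht => ⟨ht.2.le, ht.1.2⟩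
  calc unifIcc l u (Set.Ioi z)
      = (ENNReal.ofReal (u - l))⁻¹ * volume (Set.Icc l u ∩ Set.Ioi z) := by
        rw [unifIcc_eq_cond, ProbabilityTheory.cond_apply measurableSet_Icc, Real.volume_Icc]
    _ ≤ (ENNReal.ofReal (u - l))⁻¹ * ENNReal.ofReal (u - z) := by
        gcongr
        exact (measure_mono hsub).trans_eq Real.volume_Icc
    _ = ENNReal.ofReal (-((z - l) / (u - l)) + 1) := by
        rw [← ENNReal.ofReal_inv_of_pos hd, ← ENNReal.ofReal_mul (by positivity)]
        congr 1
        field_simp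
        ring
    _ ≤ ENNReal.ofReal (Real.exp (-((z - l) / (u - l)))) :=
        ENNReal.ofReal_le_ofReal (Real.add_one_le_exp _)

lemma integrable_inv_unifIcc (hl : 0 < l) (hlu : l < u) :
    Integrable (fun t : ℝ => t⁻¹) (unifIcc l u) := by
  have hcont : ContinuousOn (fun t : ℝ => t⁻¹) (Set.Icc l u) :=
    continuousOn_inv₀.mono fun t ht => (hl.trans_le ht.1).ne'
  exact Integrable.smul_measure hcont.integrableOn_Icc (ENNReal.inv_ne_top.2 (by simpa using hlu))

lemma integral_inv_unifIcc (hl : 0 < l) (hlu : l < u) :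
    ∫ t, t⁻¹ ∂unifIcc l u = (u - l)⁻¹ * Real.log (u / l) := by
  rw [unifIcc, integral_smul_measure, integral_Icc_eq_integral_Ioc,
    ← intervalIntegral.integral_of_le hlu.le, integral_inv_of_pos hl (hl.trans hlu),
    ENNReal.toReal_inv, ENNReal.toReal_ofReal (sub_pos.2 hlu).le, smul_eq_mul]

variable {R : Type} [Fintype R]

variable (R) in
lemma isProbabilityMeasure_prodUnif (hlu : l < u) :
    IsProbabilityMeasure (prodUnif R l u) := by
  have := isProbabilityMeasure_unifIcc hlu
  unfold prodUnif
  infer_instance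

variable (R) in
lemma ae_prodUnif_mem (hlu : l < u) :
    ∀ᵐ τ ∂prodUnif R l u, ∀ r, τ r ∈ Set.Icc l u := by
  have := isProbabilityMeasure_unifIcc hlu
  exact Filter.eventually_all.2 fun r =>
    Measure.tendsto_eval_ae_ae.eventually (ae_unifIcc_mem l u)

lemma integrable_sum_inv_mul_prodUnif (hl : 0 < l) (hlu : l < u) (A : R → ℝ) :
    Integrable (fun τ : R → ℝ => ∑ r, (τ r)⁻¹ * A r) (prodUnif R l u) := by
  have := isProbabilityMeasure_unifIcc hlu
  exact integrable_finsetSum _ fun r _ =>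
    (integrable_comp_eval (integrable_inv_unifIcc hl hlu)).mul_const _

lemma integral_sum_inv_mul_prodUnif (hl : 0 < l) (hlu : l < u) (A : R → ℝ) :
    ∫ τ, ∑ r, (τ r)⁻¹ * A r ∂prodUnif R l u = (u - l)⁻¹ * Real.log (u / l) * ∑ r, A r := by
  have := isProbabilityMeasure_unifIcc hlu
  have hint := integrable_inv_unifIcc hl hlu
  rw [prodUnif, integral_finsetSum _ fun r _ => (integrable_comp_eval hint).mul_const (A r),
    Finset.mul_sum]
  refine Finset.sum_congr rfl fun r _ => ?_
  rw [integral_mul_const, integral_comp_eval (μ := fun _ : R => unifIcc l u) (i := r)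
    hint.aestronglyMeasurable, integral_inv_unifIcc hl hlu]

lemma integral_compositeObj_capScale_le {ι α : Type*} [Fintype ι] [Fintype α] (hl : 0 < l)
    (hlu : l < u) {c' ℓ' c'' ℓ'' : α → ℝ} (hc' : 0 ≤ c') (hℓ' : 0 ≤ ℓ') (hc'' : 0 ≤ c'')
    (hℓ'' : 0 ≤ ℓ'') {xu xd : R → α → ℝ} {fs ft : ι → R → α → ℝ} (hxu : 0 ≤ xu) (hxd : 0 ≤ xd)
    (hfs : 0 ≤ fs) (hft : 0 ≤ ft) :
    ∫ τ, compositeObj c' ℓ' c'' ℓ'' (capScale τ xu) (capScale τ xd) (fun i => capScale τ (fs i))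
        (fun i => capScale τ (ft i)) ∂prodUnif R l u ≤
      (u - l)⁻¹ * Real.log (u / l) * compositeObj c' ℓ' c'' ℓ'' xu xd fs ft := by
  rw [compositeObj_eq_sum_rootCost c' ℓ' c'' ℓ'' xu, ← integral_sum_inv_mul_prodUnif hl hlu]
  refine integral_mono_of_nonneg ?_ (integrable_sum_inv_mul_prodUnif hl hlu _)
    (.of_forall fun τ => compositeObj_capScale_le hc' hℓ' hc'' hℓ'' τ xu xd fs ft)
  filter_upwards [ae_prodUnif_mem R hlu] with τ hτ
  have hτ0 (r : R) : 0 ≤ τ r := hl.le.trans (hτ r).1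
  exact compositeObj_nonneg hc' hℓ' hc'' hℓ'' (fun r => capScale_nonneg (hτ0 r) (hxu r))
    (fun r => capScale_nonneg (hτ0 r) (hxd r)) (fun i r => capScale_nonneg (hτ0 r) (hfs i r))
    (fun i r => capScale_nonneg (hτ0 r) (hft i r))

lemma prodUnif_pi_Ioi_le (hlu : l < u) (z : R → ℝ) :
    prodUnif R l u (Set.univ.pi fun r => Set.Ioi (z r)) ≤
      ENNReal.ofReal (Real.exp (-((∑ r, z r - Fintype.card R * l) / (u - l)))) := by
  have := isProbabilityMeasure_unifIcc hlu
  calc prodUnif R l u (Set.univ.pi fun r => Set.Ioi (z r))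
      = ∏ r, unifIcc l u (Set.Ioi (z r)) := by rw [prodUnif, Measure.pi_pi]
    _ ≤ ∏ r, ENNReal.ofReal (Real.exp (-((z r - l) / (u - l)))) :=
        Finset.prod_le_prod' fun r _ => unifIcc_Ioi_le hlu (z r)
    _ = ENNReal.ofReal (Real.exp (-((∑ r, z r - Fintype.card R * l) / (u - l)))) := by
        rw [← ENNReal.ofReal_prod_of_nonneg fun _ _ => (Real.exp_pos _).le, ← Real.exp_sum,
          Finset.sum_neg_distrib, ← Finset.sum_div, Finset.sum_sub_distrib, Finset.sum_const,
          Finset.card_univ, nsmul_eq_mul]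

lemma le_prodUnif_exists_le (hlu : l < u) (z : R → ℝ) :
    ENNReal.ofReal (1 - Real.exp (-((∑ r, z r - Fintype.card R * l) / (u - l)))) ≤
      prodUnif R l u {τ | ∃ r, τ r ≤ z r} := by
  have := isProbabilityMeasure_prodUnif R hlu
  have hcompl : {τ : R → ℝ | ∃ r, τ r ≤ z r} = (Set.univ.pi fun r => Set.Ioi (z r))ᶜ := by
    ext τ
    simp
  rw [hcompl, prob_compl_eq_one_sub (.univ_pi fun _ => measurableSet_Ioi),
    ENNReal.ofReal_sub _ (Real.exp_pos _).le, ENNReal.ofReal_one]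
  exact tsub_le_tsub_left (prodUnif_pi_Ioi_le hlu z) 1

end UniformThresholds

section ThresholdInterval

variable {x : ℝ}

lemma one_le_six_mul_log (hx : 2 ≤ x) : 1 ≤ 6 * Real.log x := by
  have := Real.log_two_gt_d9
  have := Real.log_le_log two_pos hx
  linarith

lemma twelve_mul_log_le_pow_five (hx : 2 ≤ x) : 12 * Real.log x ≤ x ^ 5 := by
  have hlog : Real.log x ≤ x - 1 := Real.log_le_sub_one_of_pos (by linarith)
  have hpow : (2 : ℝ) ^ 4 ≤ x ^ 4 := pow_le_pow_left₀ zero_le_two hx 4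
  nlinarith

lemma one_div_twelve_mul_log_le_sub (hx : 2 ≤ x) :
    1 / (12 * Real.log x) ≤ 1 / (6 * Real.log x) - 1 / x ^ 5 := by
  have hlog : 0 < Real.log x := Real.log_pos (by linarith)
  have hinv : 1 / x ^ 5 ≤ 1 / (12 * Real.log x) :=
    one_div_le_one_div_of_le (by positivity) (twelve_mul_log_le_pow_five hx)
  have hsplit : 1 / (6 * Real.log x) = 1 / (12 * Real.log x) + 1 / (12 * Real.log x) := by
    field_simp
    norm_num
  linarith

lemma one_div_pow_five_lt (hx : 2 ≤ x) : 1 / x ^ 5 < 1 / (6 * Real.log x) := by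
  have hlog : 0 < Real.log x := Real.log_pos (by linarith)
  exact sub_pos.1 ((by positivity : 0 < 1 / (12 * Real.log x)).trans_le
    (one_div_twelve_mul_log_le_sub hx))

lemma inv_sub_mul_log_div_le (hx : 2 ≤ x) :
    (1 / (6 * Real.log x) - 1 / x ^ 5)⁻¹ * Real.log (1 / (6 * Real.log x) / (1 / x ^ 5)) ≤
      60 * Real.log x ^ 2 := by
  have : 0 < x := by linarith
  have hlog : 0 < Real.log x := Real.log_pos (by linarith)
  have hlen : (1 / (6 * Real.log x) - 1 / x ^ 5)⁻¹ ≤ 12 * Real.log x := by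
    rw [inv_le_comm₀ (sub_pos.2 (one_div_pow_five_lt hx)) (by positivity), ← one_div]
    exact one_div_twelve_mul_log_le_sub hx
  have hratio : Real.log (1 / (6 * Real.log x) / (1 / x ^ 5)) ≤ 5 * Real.log x := by
    rw [div_div_eq_mul_div, div_one, one_div_mul_eq_div]
    calc Real.log (x ^ 5 / (6 * Real.log x)) ≤ Real.log (x ^ 5) :=
          Real.log_le_log (by positivity) (div_le_self (by positivity) (one_le_six_mul_log hx))
      _ = 5 * Real.log x := by rw [Real.log_pow, Nat.cast_ofNat]
  calc (1 / (6 * Real.log x) - 1 / x ^ 5)⁻¹ * Real.log (1 / (6 * Real.log x) / (1 / x ^ 5))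
      ≤ (1 / (6 * Real.log x) - 1 / x ^ 5)⁻¹ * (5 * Real.log x) := by
        have := inv_nonneg.2 (sub_nonneg.2 (one_div_pow_five_lt hx).le)
        gcongr
    _ ≤ 12 * Real.log x * (5 * Real.log x) := by gcongr
    _ = 60 * Real.log x ^ 2 := by ring

lemma three_mul_log_le_div (hx : 2 ≤ x) :
    3 * Real.log x ≤ (1 - x * (1 / x ^ 5)) / (1 / (6 * Real.log x) - 1 / x ^ 5) := by
  have : 0 < x := by linarith
  have hlog : 0 < Real.log x := Real.log_pos (by linarith)
  have hmass : x * (1 / x ^ 5) ≤ 1 / 2 := by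
    have hpow : (2 : ℝ) ^ 4 ≤ x ^ 4 := pow_le_pow_left₀ zero_le_two hx 4
    rw [mul_one_div, div_le_iff₀ (by positivity)]
    nlinarith
  rw [le_div_iff₀ (sub_pos.2 (one_div_pow_five_lt hx))]
  calc 3 * Real.log x * (1 / (6 * Real.log x) - 1 / x ^ 5)
      ≤ 3 * Real.log x * (1 / (6 * Real.log x)) := by
        gcongr
        exact sub_le_self _ (by positivity)
    _ = 1 / 2 := by field_simp; norm_num
    _ ≤ 1 - x * (1 / x ^ 5) := by linarith

lemma exp_neg_div_le {m M : ℝ} (hx : 2 ≤ x) (hm : m ≤ x) (hM : 1 ≤ M) :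
    Real.exp (-((M - m * (1 / x ^ 5)) / (1 / (6 * Real.log x) - 1 / x ^ 5))) ≤ 1 / x ^ 3 := by
  have hx0 : 0 < x := by linarith
  have hlen := sub_pos.2 (one_div_pow_five_lt hx)
  calc Real.exp (-((M - m * (1 / x ^ 5)) / (1 / (6 * Real.log x) - 1 / x ^ 5)))
      ≤ Real.exp (-(3 * Real.log x)) := by
        refine Real.exp_le_exp.2 (neg_le_neg ((three_mul_log_le_div hx).trans ?_))
        gcongr
    _ = 1 / x ^ 3 := by
        rw [Real.exp_neg, ← Nat.cast_ofNat (n := 3), Real.exp_nat_mul, Real.exp_log hx0, one_div]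

end ThresholdInterval

theorem partial_online_rounding_general {R W : Type} {ι : Type*} [Fintype R] [Fintype W]
    [Fintype ι] {Eup Edown : Set (W × W)} (hup : IsAcyclic Eup) (hdown : IsAcyclic Edown)
    (root : R → W) (src snk : ι → W) {n : ℕ} (hn : 2 ≤ n) (hR : Fintype.card R ≤ n)
    {c' ℓ' c'' ℓ'' : W × W → ℝ} (hc' : 0 ≤ c') (hℓ' : 0 ≤ ℓ') (hc'' : 0 ≤ c'') (hℓ'' : 0 ≤ ℓ'')
    {z : ι → R → ℝ} {xu xd : R → W × W → ℝ} {fs ft : ι → R → W × W → ℝ}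
    (hz : ∀ i, 1 ≤ ∑ r, z i r) (hxu : 0 ≤ xu) (hxd : 0 ≤ xd)
    (hfs : ∀ i r, IsFlow Eup (fs i r) (src i) (root r) (z i r))
    (hft : ∀ i r, IsFlow Edown (ft i r) (root r) (snk i) (z i r))
    (hfsx : ∀ i, fs i ≤ xu) (hftx : ∀ i, ft i ≤ xd) :
    (∀ τ : R → ℝ, (∀ r, τ r ∈ Set.Icc (1 / (n : ℝ) ^ 5) (1 / (6 * Real.log n))) →
      ∀ i r, τ r ≤ z i r →
        (∃ g, IsFlow Eup g (src i) (root r) 1 ∧ ∀ e, g e ≤ capScale τ (fs i) r e) ∧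
        (∃ g, IsFlow Edown g (root r) (snk i) 1 ∧ ∀ e, g e ≤ capScale τ (ft i) r e) ∧
        capScale τ (fs i) r ≤ capScale τ xu r ∧ capScale τ (ft i) r ≤ capScale τ xd r) ∧
    ∫ τ, compositeObj c' ℓ' c'' ℓ'' (capScale τ xu) (capScale τ xd) (fun i => capScale τ (fs i))
        (fun i => capScale τ (ft i)) ∂prodUnif R (1 / (n : ℝ) ^ 5) (1 / (6 * Real.log n)) ≤
      60 * Real.log n ^ 2 * compositeObj c' ℓ' c'' ℓ'' xu xd fs ft ∧
    ∀ i, ENNReal.ofReal (1 - 1 / (n : ℝ) ^ 3) ≤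
      prodUnif R (1 / (n : ℝ) ^ 5) (1 / (6 * Real.log n)) {τ | ∃ r, τ r ≤ z i r} := by
  have hn' : (2 : ℝ) ≤ n := Nat.ofNat_le_cast.2 hn
  have hl : 0 < 1 / (n : ℝ) ^ 5 := by positivity
  have hlu := one_div_pow_five_lt hn'
  have hfs0 : 0 ≤ fs := fun i r => (hfs i r).1
  have hft0 : 0 ≤ ft := fun i r => (hft i r).1
  refine ⟨fun τ hτ i r hτz => ?_, ?_, fun i => ?_⟩
  · have hτ0 : 0 < τ r := hl.trans_le (hτ r).1
    exact ⟨(hfs i r).exists_unit_le_min_div hup hτ0 hτz,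
      (hft i r).exists_unit_le_min_div hdown hτ0 hτz,
      capScale_mono hτ0.le (hfsx i r), capScale_mono hτ0.le (hftx i r)⟩
  · refine (integral_compositeObj_capScale_le hl hlu hc' hℓ' hc'' hℓ'' hxu hxd hfs0 hft0).trans ?_
    exact mul_le_mul_of_nonneg_right (inv_sub_mul_log_div_le hn')
      (compositeObj_nonneg hc' hℓ' hc'' hℓ'' hxu hxd hfs0 hft0)
  · refine le_trans ?_ (le_prodUnif_exists_le hlu (z i))
    exact ENNReal.ofReal_le_ofReal
      (sub_le_sub_left (exp_neg_div_le hn' (Nat.cast_le.2 hR) (hz i)) 1)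

/-- **Partial online rounding of the composite LP.**  Let `(z, xu, xd, fs, ft)` be a
feasible solution of the composite MC-BaB LP of objective value `Φ`, on an instance
with `n ≥ 2` vertices.  Drawing independent uniform thresholds
`τ_r ∈ [1/n^5, 1/(6 ln n)]` and scaling by `min 1 (·/τ_r)`:
(i) deterministically, whenever `z i r ≥ τ r` the scaled flow capacities admit unit
flows (to `r` in `G^up` and from `r` in `G^down`) and scaled flows stay below scaled
capacities; (ii) the expected scaled objective is at most `C·(ln n)²·Φ`; and
(iii) each pair has some root with `z i r ≥ τ r` with probability at least
`1 - 1/n³`. -/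
theorem partial_online_rounding :
    ∃ C : ℝ, 0 < C ∧
      ∀ (V : Type) [Fintype V] [DecidableEq V],
        ∀ (E : Set (V × V)) (X : List (V × V)) (n h : ℕ),
        n = Fintype.card V → 2 ≤ n →
        ∀ (c' ℓ' c'' ℓ'' : (Fin (h + 1) × V) × (Fin (h + 1) × V) → ℝ),
        (∀ e, 0 ≤ c' e) → (∀ e, 0 ≤ ℓ' e) → (∀ e, 0 ≤ c'' e) → (∀ e, 0 ≤ ℓ'' e) →
        ∀ (z : Fin X.length → V → ℝ)
          (xu xd : V → (Fin (h + 1) × V) × (Fin (h + 1) × V) → ℝ)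
          (fs ft : Fin X.length → V → (Fin (h + 1) × V) × (Fin (h + 1) × V) → ℝ)
          (Φ : ℝ),
        (∀ i rt, 0 ≤ z i rt) → (∀ i, 1 ≤ ∑ rt : V, z i rt) →
        (∀ rt e, 0 ≤ xu rt e) → (∀ rt e, 0 ≤ xd rt e) →
        (∀ i rt, IsFlow (upEdges E h) (fs i rt)
            (Fin.last h, (X.get i).1) ((0 : Fin (h + 1)), rt) (z i rt)) →
        (∀ i rt, IsFlow (downEdges E h) (ft i rt)
            ((0 : Fin (h + 1)), rt) (Fin.last h, (X.get i).2) (z i rt)) →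
        (∀ i rt e, fs i rt e ≤ xu rt e) → (∀ i rt e, ft i rt e ≤ xd rt e) →
        Φ = (∑ rt : V, ∑ e : (Fin (h + 1) × V) × (Fin (h + 1) × V),
              (c' e * xu rt e + c'' e * xd rt e))
            + ∑ i, ∑ rt : V, ∑ e : (Fin (h + 1) × V) × (Fin (h + 1) × V),
                (ℓ' e * fs i rt e + ℓ'' e * ft i rt e) →
        -- (i) deterministic feasibility of the scaled solution
        ((∀ τ : V → ℝ,
          (∀ rt, τ rt ∈ Set.Icc (1 / (n : ℝ) ^ 5) (1 / (6 * Real.log n))) →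
          ∀ (i : Fin X.length) (rt : V), τ rt ≤ z i rt →
            (∃ g, IsFlow (upEdges E h) g (Fin.last h, (X.get i).1) ((0 : Fin (h + 1)), rt) 1 ∧
              ∀ e, g e ≤ min 1 (fs i rt e / τ rt)) ∧
            (∃ g, IsFlow (downEdges E h) g ((0 : Fin (h + 1)), rt) (Fin.last h, (X.get i).2) 1 ∧
              ∀ e, g e ≤ min 1 (ft i rt e / τ rt)) ∧
            (∀ e, min 1 (fs i rt e / τ rt) ≤ min 1 (xu rt e / τ rt)) ∧
            (∀ e, min 1 (ft i rt e / τ rt) ≤ min 1 (xd rt e / τ rt))) ∧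
        -- (ii) expected objective value of the scaled solution
        (∫ τ, ((∑ rt : V, ∑ e : (Fin (h + 1) × V) × (Fin (h + 1) × V),
                  (c' e * min 1 (xu rt e / τ rt) + c'' e * min 1 (xd rt e / τ rt)))
                + ∑ i, ∑ rt : V, ∑ e : (Fin (h + 1) × V) × (Fin (h + 1) × V),
                    (ℓ' e * min 1 (fs i rt e / τ rt) + ℓ'' e * min 1 (ft i rt e / τ rt)))
            ∂(prodUnif V (1 / (n : ℝ) ^ 5) (1 / (6 * Real.log n)))
          ≤ C * Real.log n ^ 2 * Φ) ∧
        -- (iii) every pair is assigned to some root with high probability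
        (∀ i : Fin X.length,
          ENNReal.ofReal (1 - 1 / (n : ℝ) ^ 3)
            ≤ prodUnif V (1 / (n : ℝ) ^ 5) (1 / (6 * Real.log n)) {τ | ∃ rt, τ rt ≤ z i rt})) := by
  refine ⟨60, by norm_num, fun V _ _ E X n h hcard hn c' ℓ' c'' ℓ'' hc' hℓ' hc'' hℓ'' z xu xd fs ft
    Φ _ hz hxu hxd hfs hft hfsx hftx hΦ => hΦ ▸ ?_⟩
  exact partial_online_rounding_general (isAcyclic_upEdges E h) (isAcyclic_downEdges E h)
    (fun r => (0, r)) (fun i => (Fin.last h, (X.get i).1)) (fun i => (Fin.last h, (X.get i).2))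
    hn hcard.ge hc' hℓ' hc'' hℓ'' hz hxu hxd hfs hft hfsx hftx

end BaB
end

section
/- Let G be a finite directed graph, let s and r be vertices, and let {f_e}_{e∈E} be a flow of value z > 0 from s to r. Let 0 < τ ≤ z. Then for every set Q of edges such that every directed path from s to r uses at least one edge of Q, one has Σ_{e∈Q} min(1, f_e/τ) ≥ 1. Consequently, by the max-flow min-cut theorem, the edge capacities u_e := min(1, f_e/τ) admit a flow of value at least 1 from s to r. -/
/-!
The capacities `min 1 (f e / τ)` of a vertex cut `S ∋ s` sum to at least one because truncation at
`1` is subadditive and the flow `f` sends at least `z ≥ τ` across `S`. An edge cut `Q` contains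
every edge of `E` leaving the set of vertices reachable from `s` without using `Q`, so its capacity
is at least that of this vertex cut. For max-flow min-cut, a flow of maximal value exists by
compactness; pushing a little more along a residual path to the sink would increase the value, so
the vertices reachable in the residual network form a cut whose capacity equals the value.
-/

namespace BaB

open Filter Topology

section NetOutflow

variable {V R : Type*} [Fintype V] [Ring R]

/-- The net outflow of an edge weighting at each vertex, as a linear map, so that edge weightings
can be superposed. -/
def netOutflow : (V × V → R) →ₗ[R] V → R :=
  LinearMap.pi fun v => ∑ w, LinearMap.proj (v, w) - ∑ w, LinearMap.proj (w, v)

theorem netOutflow_apply (g : V × V → R) (v : V) :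
    netOutflow g v = ∑ w, g (v, w) - ∑ w, g (w, v) := by
  simp [netOutflow]

variable [DecidableEq V]

theorem netOutflow_single (a b : V) (x : R) :
    netOutflow (Pi.single (a, b) x) = Pi.single a x - Pi.single b x := by
  ext v
  rw [netOutflow_apply, Pi.sub_apply]
  congr 1
  · by_cases h : v = a <;> simp [Pi.single_apply, Prod.ext_iff, h]
  · by_cases h : v = b <;> simp [Pi.single_apply, Prod.ext_iff, h]

theorem sum_netOutflow (g : V × V → R) (S : Finset V) :
    ∑ v ∈ S, netOutflow g v = ∑ e ∈ S ×ˢ Sᶜ, g e - ∑ e ∈ Sᶜ ×ˢ S, g e := by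
  have outflow : ∑ v ∈ S, ∑ w, g (v, w) =
      ∑ v ∈ S, ∑ w ∈ S, g (v, w) + ∑ e ∈ S ×ˢ Sᶜ, g e := by
    simp only [Finset.sum_product, ← Finset.sum_add_distrib, Finset.sum_add_sum_compl]
  have inflow : ∑ v ∈ S, ∑ w, g (w, v) =
      ∑ v ∈ S, ∑ w ∈ S, g (w, v) + ∑ e ∈ Sᶜ ×ˢ S, g e := by
    simp only [Finset.sum_product_right, ← Finset.sum_add_distrib, Finset.sum_add_sum_compl]
  simp only [netOutflow_apply, Finset.sum_sub_distrib]
  rw [outflow, inflow, Finset.sum_comm, add_sub_add_left_eq_sub]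

theorem netOutflow_source_eq_sum_cut {g : V × V → R} {s r : V}
    (hg : ∀ u, u ≠ s → u ≠ r → netOutflow g u = 0) {S : Finset V} (hs : s ∈ S) (hr : r ∉ S) :
    netOutflow g s = ∑ e ∈ S ×ˢ Sᶜ, g e - ∑ e ∈ Sᶜ ×ˢ S, g e := by
  rw [← sum_netOutflow]
  exact (Finset.sum_eq_single_of_mem s hs fun u hu hus =>
    hg u hus (ne_of_mem_of_not_mem hu hr)).symm

end NetOutflow

section Residual

variable {V R : Type*}

/-- Adjacency in the residual network of the flow `g` under capacities `u`: an edge `(a, b)` with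
spare capacity is traversed forwards, an edge `(b, a)` carrying flow is traversed backwards. -/
def ResidualAdj [Zero R] [LT R] (u g : V × V → R) (a b : V) : Prop :=
  g (a, b) < u (a, b) ∨ 0 < g (b, a)

theorem not_residualAdj [Zero R] [LinearOrder R] {u g : V × V → R} {a b : V} :
    ¬ ResidualAdj u g a b ↔ u (a, b) ≤ g (a, b) ∧ g (b, a) ≤ 0 := by
  simp only [ResidualAdj, not_or, not_lt]

theorem exists_augmenting_direction [Ring R] [LinearOrder R] [IsOrderedRing R] [Fintype V]
    [DecidableEq V] {u g : V × V → R} {s t : V}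
    (h : Relation.ReflTransGen (ResidualAdj u g) s t) :
    ∃ d : V × V → R, netOutflow d = Pi.single s 1 - Pi.single t 1 ∧
      (∀ e, 0 < d e → g e < u e) ∧ ∀ e, d e < 0 → 0 < g e := by
  have unit_nonneg (e₀ e : V × V) : 0 ≤ (Pi.single e₀ 1 : V × V → R) e :=
    (Pi.single_nonneg.2 zero_le_one : (0 : V × V → R) ≤ Pi.single e₀ 1) e
  induction h with
  | refl => exact ⟨0, by simp⟩
  | @tail b c _ hbc ih =>
    obtain ⟨d, hnet, hpos, hneg⟩ := ih
    rcases hbc with forward | backward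
    · refine ⟨d + Pi.single (b, c) 1, ?_, fun e he => ?_, fun e he => hneg e ?_⟩
      · rw [map_add, netOutflow_single, hnet, sub_add_sub_cancel]
      · obtain rfl | hne := eq_or_ne e (b, c)
        · exact forward
        · exact hpos e (by simpa [hne] using he)
      · exact (le_add_of_nonneg_right (unit_nonneg _ e)).trans_lt he
    · refine ⟨d - Pi.single (c, b) 1, ?_, fun e he => hpos e ?_, fun e he => ?_⟩
      · rw [map_sub, netOutflow_single, hnet, sub_sub_sub_cancel_right]
      · exact he.trans_le (sub_le_self _ (unit_nonneg _ e))
      · obtain rfl | hne := eq_or_ne e (c, b)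
        · exact backward
        · exact hneg e (by simpa [hne] using he)

end Residual

theorem exists_pos_add_smul_mem_Icc {ι : Type*} [Finite ι] {l u x d : ι → ℝ}
    (hx : x ∈ Set.Icc l u) (hpos : ∀ i, 0 < d i → x i < u i) (hneg : ∀ i, d i < 0 → l i < x i) :
    ∃ ε > (0 : ℝ), x + ε • d ∈ Set.Icc l u := by
  have eventually_mem : ∀ i, ∀ᶠ ε in 𝓝[>] (0 : ℝ), x i + ε * d i ∈ Set.Icc (l i) (u i) := by
    intro i
    have tendsto : Tendsto (fun ε : ℝ => x i + ε * d i) (𝓝[>] 0) (𝓝 (x i)) := by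
      have : Continuous fun ε : ℝ => x i + ε * d i := by fun_prop
      simpa using (this.tendsto 0).mono_left nhdsWithin_le_nhds
    have hl := hx.1 i
    have hu := hx.2 i
    rcases lt_trichotomy (d i) 0 with hd | hd | hd
    · filter_upwards [tendsto.eventually_const_lt (hneg i hd), self_mem_nhdsWithin] with ε hε hε0
      exact ⟨hε.le, by linarith [mul_neg_of_pos_of_neg hε0 hd]⟩
    · simp [hd, hl, hu]
    · filter_upwards [tendsto.eventually_lt_const (hpos i hd), self_mem_nhdsWithin] with ε hε hε0
      exact ⟨by linarith [mul_pos hε0 hd], hε.le⟩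
  obtain ⟨ε, hε, hε0⟩ := ((eventually_all.2 eventually_mem).and self_mem_nhdsWithin).exists
  exact ⟨ε, hε0, fun i => (hε i).1, fun i => (hε i).2⟩

section MaxFlow

variable {V : Type*} [Fintype V]

/-- The flows from `s` to `r` of arbitrary value that respect the capacities `u`. -/
def feasibleFlows (u : V × V → ℝ) (s r : V) : Set (V × V → ℝ) :=
  {g ∈ Set.Icc 0 u | ∀ v, v ≠ s → v ≠ r → netOutflow g v = 0}

theorem continuous_netOutflow_apply (v : V) :
    Continuous fun g : V × V → ℝ => netOutflow g v := by
  simp only [netOutflow_apply]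
  fun_prop

theorem isCompact_feasibleFlows (u : V × V → ℝ) (s r : V) : IsCompact (feasibleFlows u s r) := by
  suffices IsClosed {g : V × V → ℝ | ∀ v, v ≠ s → v ≠ r → netOutflow g v = 0} from
    isCompact_Icc.inter_right this
  simp only [Set.ofPred_forall]
  exact isClosed_iInter fun v => isClosed_iInter fun _ => isClosed_iInter fun _ =>
    isClosed_eq (continuous_netOutflow_apply v) continuous_const

theorem not_reachable_of_isMaxOn {u g : V × V → ℝ} {s r : V} (hsr : s ≠ r)
    (hg : g ∈ feasibleFlows u s r)
    (hmax : IsMaxOn (fun g => netOutflow g s) (feasibleFlows u s r) g) :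
    ¬ Relation.ReflTransGen (ResidualAdj u g) s r := by
  classical
  intro hreach
  obtain ⟨d, hnet, hpos, hneg⟩ := exists_augmenting_direction hreach
  obtain ⟨ε, hε, hmem⟩ := exists_pos_add_smul_mem_Icc hg.1 hpos hneg
  have feasible : g + ε • d ∈ feasibleFlows u s r :=
    ⟨hmem, fun v hvs hvr => by simp [hnet, hg.2 v hvs hvr, hvs, hvr]⟩
  have value_augmented : netOutflow (g + ε • d) s = netOutflow g s + ε := by
    simp [hnet, hsr]
  have : netOutflow (g + ε • d) s ≤ netOutflow g s := hmax feasible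
  linarith

theorem exists_cut_eq_of_not_reachable [DecidableEq V] {u g : V × V → ℝ} {s r : V}
    (hg : g ∈ feasibleFlows u s r) (hreach : ¬ Relation.ReflTransGen (ResidualAdj u g) s r) :
    ∃ S : Finset V, s ∈ S ∧ r ∉ S ∧ netOutflow g s = ∑ e ∈ S ×ˢ Sᶜ, u e := by
  classical
  let S : Finset V := {v | Relation.ReflTransGen (ResidualAdj u g) s v}
  have mem_S {v : V} : v ∈ S ↔ Relation.ReflTransGen (ResidualAdj u g) s v := by simp [S]
  have hs : s ∈ S := mem_S.2 .refl
  have hr : r ∉ S := mem_S.not.2 hreach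
  have no_residual_exit {a b : V} (ha : a ∈ S) (hb : b ∈ Sᶜ) :
      u (a, b) ≤ g (a, b) ∧ g (b, a) ≤ 0 := not_residualAdj.1 fun hab =>
    Finset.mem_compl.1 hb (mem_S.2 ((mem_S.1 ha).tail hab))
  have saturated : ∀ e ∈ S ×ˢ Sᶜ, g e = u e := fun e he =>
    have ⟨ha, hb⟩ := Finset.mem_product.1 he
    (hg.1.2 e).antisymm (no_residual_exit ha hb).1
  have no_return : ∀ e ∈ Sᶜ ×ˢ S, g e = 0 := fun e he =>
    have ⟨hb, ha⟩ := Finset.mem_product.1 he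
    (no_residual_exit ha hb).2.antisymm (hg.1.1 e)
  refine ⟨S, hs, hr, ?_⟩
  rw [netOutflow_source_eq_sum_cut hg.2 hs hr, Finset.sum_congr rfl saturated,
    Finset.sum_eq_zero no_return, sub_zero]

end MaxFlow

section IsFlow

variable {V : Type} [Fintype V] {E : Set (V × V)} {f : V × V → ℝ} {s r : V} {z : ℝ}

theorem isFlow_iff : IsFlow E f s r z ↔ (∀ e, 0 ≤ f e) ∧ (∀ e, e ∉ E → f e = 0) ∧
    (∀ u, u ≠ s → u ≠ r → netOutflow f u = 0) ∧ netOutflow f s = z := by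
  simp only [IsFlow, netOutflow_apply, sub_eq_zero,
    eq_comm (a := ∑ w, f (_, w)) (b := ∑ w, f (w, _))]

theorem IsFlow.source_ne_sink (hf : IsFlow E f s r z) (hz : z ≠ 0) : s ≠ r := by
  classical
  rintro rfl
  obtain ⟨-, -, conserved, value⟩ := isFlow_iff.1 hf
  have total : ∑ v, netOutflow f v = 0 := by simp [sum_netOutflow]
  rw [Fintype.sum_eq_single s fun v hv => conserved v hv hv, value] at total
  exact hz total

variable [DecidableEq V]

theorem IsFlow.value_le_sum_cut (hf : IsFlow E f s r z) {S : Finset V} (hs : s ∈ S)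
    (hr : r ∉ S) : z ≤ ∑ e ∈ S ×ˢ Sᶜ, f e := by
  obtain ⟨nonneg, -, conserved, rfl⟩ := isFlow_iff.1 hf
  rw [netOutflow_source_eq_sum_cut conserved hs hr]
  exact sub_le_self _ (Finset.sum_nonneg fun e _ => nonneg e)

theorem max_flow_min_cut {u : V × V → ℝ} (hu : ∀ e, 0 ≤ u e)
    (huE : ∀ e, e ∉ E → u e = 0) (hsr : s ≠ r) :
    ∃ (v : ℝ) (g : V × V → ℝ) (S : Finset V), IsFlow E g s r v ∧ (∀ e, g e ≤ u e) ∧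
      s ∈ S ∧ r ∉ S ∧ v = ∑ e ∈ S ×ˢ Sᶜ, u e := by
  have nonempty : (feasibleFlows u s r).Nonempty := ⟨0, ⟨le_rfl, hu⟩, by simp⟩
  obtain ⟨g, hg, hmax⟩ := (isCompact_feasibleFlows u s r).exists_isMaxOn nonempty
    (continuous_netOutflow_apply s).continuousOn
  obtain ⟨S, hs, hr, hcut⟩ :=
    exists_cut_eq_of_not_reachable hg (not_reachable_of_isMaxOn hsr hg hmax)
  have support : ∀ e, e ∉ E → g e = 0 := fun e he =>
    ((hg.1.2 e).trans_eq (huE e he)).antisymm (hg.1.1 e)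
  exact ⟨netOutflow g s, g, S, isFlow_iff.2 ⟨hg.1.1, support, hg.2, rfl⟩, hg.1.2, hs, hr, hcut⟩

end IsFlow

section EdgeCut

variable {V : Type} {E : Set (V × V)} {s r : V}

theorem IsWalk.concat {a b : V} (hab : (a, b) ∈ E) :
    ∀ {s : V} {p : List (V × V)}, IsWalk E s a p → IsWalk E s b (p ++ [(a, b)])
  | _, [], rfl => ⟨rfl, hab, rfl⟩
  | _, _ :: _, ⟨hfst, hmem, hp⟩ => ⟨hfst, hmem, hp.concat hab⟩

theorem exists_vertexCut_of_edgeCut {Q : Set (V × V)}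
    (hQ : ∀ w : List (V × V), IsWalk E s r w → ∃ e ∈ w, e ∈ Q) :
    ∃ S : Set V, s ∈ S ∧ r ∉ S ∧ ∀ a ∈ S, ∀ b ∉ S, (a, b) ∈ E → (a, b) ∈ Q := by
  refine ⟨{v | ∃ p, IsWalk E s v p ∧ ∀ e ∈ p, e ∉ Q}, ⟨[], rfl, by simp⟩, ?_, ?_⟩
  · rintro ⟨p, hp, avoids⟩
    obtain ⟨e, he, heQ⟩ := hQ p hp
    exact avoids e he heQ
  · rintro a ⟨p, hp, avoids⟩ b hb hab
    by_contra habQ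
    exact hb ⟨p ++ [(a, b)], hp.concat hab, by
      simpa [or_imp, forall_and, habQ] using avoids⟩

theorem exists_sum_vertexCut_le_sum_edgeCut [Fintype V] [DecidableEq V] {M : Type*}
    [AddCommMonoid M] [PartialOrder M] [IsOrderedAddMonoid M] {c : V × V → M}
    (hc : ∀ e, 0 ≤ c e) (hcE : ∀ e, e ∉ E → c e = 0) {Q : Finset (V × V)}
    (hQ : ∀ w : List (V × V), IsWalk E s r w → ∃ e ∈ w, e ∈ Q) :
    ∃ S : Finset V, s ∈ S ∧ r ∉ S ∧ ∑ e ∈ S ×ˢ Sᶜ, c e ≤ ∑ e ∈ Q, c e := by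
  obtain ⟨S, hs, hr, crossing⟩ := exists_vertexCut_of_edgeCut (Q := (Q : Set (V × V))) hQ
  lift S to Finset V using S.toFinite
  have mem_Q : ∀ e ∈ S ×ˢ Sᶜ, c e ≠ 0 → e ∈ Q := fun e he hne =>
    have ⟨ha, hb⟩ := Finset.mem_product.1 he
    crossing _ ha _ (Finset.mem_compl.1 hb) (not_imp_comm.1 (hcE e) hne)
  refine ⟨S, hs, hr, ?_⟩
  calc ∑ e ∈ S ×ˢ Sᶜ, c e = ∑ e ∈ S ×ˢ Sᶜ with e ∈ Q, c e := (Finset.sum_filter_of_ne mem_Q).symm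
    _ ≤ ∑ e ∈ Q, c e := Finset.sum_le_sum_of_subset_of_nonneg
      (fun e he => (Finset.mem_filter.1 he).2) fun e _ _ => hc e

end EdgeCut

theorem min_sum_le_sum_min {ι M : Type*} [AddCommMonoid M] [LinearOrder M]
    [IsOrderedAddMonoid M] {c : M} (hc : 0 ≤ c) {x : ι → M} {A : Finset ι}
    (hx : ∀ i ∈ A, 0 ≤ x i) : min c (∑ i ∈ A, x i) ≤ ∑ i ∈ A, min c (x i) := by
  refine Finset.le_sum_of_subadditive_on_pred (min c) (0 ≤ ·) (min_le_right _ _) ?_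
    (fun _ _ => add_nonneg) x hx
  intro a b ha hb
  rcases le_total c a with hca | hac
  · rw [min_eq_left hca]
    exact (min_le_left _ _).trans (le_add_of_nonneg_right (le_min hc hb))
  rcases le_total c b with hcb | hbc
  · rw [min_eq_left hcb]
    exact (min_le_left _ _).trans (le_add_of_nonneg_left (le_min hc ha))
  · rw [min_eq_right hac, min_eq_right hbc]
    exact min_le_right _ _

theorem IsFlow.one_le_sum_min_cut {V : Type} [Fintype V] [DecidableEq V] {E : Set (V × V)}
    {f : V × V → ℝ} {s r : V} {z τ : ℝ} (hf : IsFlow E f s r z) (hτ : 0 < τ) (hτz : τ ≤ z)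
    {S : Finset V} (hs : s ∈ S) (hr : r ∉ S) : 1 ≤ ∑ e ∈ S ×ˢ Sᶜ, min 1 (f e / τ) :=
  calc (1 : ℝ) ≤ min 1 (∑ e ∈ S ×ˢ Sᶜ, f e / τ) := by
        rw [← Finset.sum_div]
        exact le_min le_rfl ((one_le_div hτ).2 (hτz.trans (hf.value_le_sum_cut hs hr)))
    _ ≤ ∑ e ∈ S ×ˢ Sᶜ, min 1 (f e / τ) :=
        min_sum_le_sum_min zero_le_one fun e _ => div_nonneg (hf.1 e) hτ.le

/-- **Scaled flows cross every cut.**  If `f` is a flow of value `z > 0` from `s` to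
`r` and `0 < τ ≤ z`, then every `s`–`r` cut `Q` has `Σ_{e ∈ Q} min(1, f_e/τ) ≥ 1`;
consequently (max-flow min-cut) the capacities `min(1, f_e/τ)` admit a flow of value
at least `1` from `s` to `r`. -/
theorem scaled_flow_crosses_cuts {V : Type} [Fintype V] [DecidableEq V]
    (E : Set (V × V)) (s r : V) (f : V × V → ℝ) (z : ℝ) (hz : 0 < z)
    (hf : IsFlow E f s r z) (τ : ℝ) (hτ : 0 < τ) (hτz : τ ≤ z) :
    (∀ Q : Finset (V × V),
        (∀ w : List (V × V), IsWalk E s r w → ∃ e ∈ w, e ∈ Q) →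
        1 ≤ ∑ e ∈ Q, min 1 (f e / τ)) ∧
    (∃ (v : ℝ) (g : V × V → ℝ), 1 ≤ v ∧ IsFlow E g s r v ∧
        ∀ e, g e ≤ min 1 (f e / τ)) := by
  have nonneg : ∀ e, 0 ≤ min 1 (f e / τ) := fun e =>
    le_min zero_le_one (div_nonneg (hf.1 e) hτ.le)
  have support : ∀ e, e ∉ E → min 1 (f e / τ) = 0 := fun e he => by simp [hf.2.1 e he]
  constructor
  · intro Q hQ
    obtain ⟨S, hs, hr, hle⟩ := exists_sum_vertexCut_le_sum_edgeCut nonneg support hQ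
    exact (hf.one_le_sum_min_cut hτ hτz hs hr).trans hle
  · obtain ⟨v, g, S, hg, hgu, hs, hr, rfl⟩ :=
      max_flow_min_cut nonneg support (hf.source_ne_sink hz.ne')
    exact ⟨_, g, hf.one_le_sum_min_cut hτ hτz hs hr, hg, hgu⟩

end BaB
end

section
/- Let H be the graph constructed from a directed instance (G,X) with layered expansions of height h, and let J = (H,X). Then every feasible solution of J of objective value φ can be mapped to a feasible solution of (G,X) — indeed a junction-tree solution — of objective value at most φ. -/
namespace BaB

/-- Vertices of the graph `H`: nodes `(r, v_i :: ⋯ :: v_1)` of the in-arborescence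
`T^up_r` (tuples recorded deepest-first), nodes of the out-arborescence `T^down_r`,
source vertices `s_i`, and sink vertices `t_i`. -/
abbrev HV (V : Type) (k : ℕ) : Type := (V × List V) ⊕ ((V × List V) ⊕ (Fin k ⊕ Fin k))

instance {V : Type} [DecidableEq V] {k : ℕ} : DecidableEq (HV V k) :=
  inferInstanceAs (DecidableEq ((V × List V) ⊕ ((V × List V) ⊕ (Fin k ⊕ Fin k))))

def upNode {V : Type} {k : ℕ} (r : V) (l : List V) : HV V k := Sum.inl (r, l)

def downNode {V : Type} {k : ℕ} (r : V) (l : List V) : HV V k := Sum.inr (Sum.inl (r, l))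

def srcNode {V : Type} {k : ℕ} (i : Fin k) : HV V k := Sum.inr (Sum.inr (Sum.inl i))

def snkNode {V : Type} {k : ℕ} (i : Fin k) : HV V k := Sum.inr (Sum.inr (Sum.inr i))

/-- Arcs of the graph `H` built from `(G, X)` with layered expansions of height `h`:
tree arcs of each `T^up_r` (towards the root, present when the corresponding layered
edge of `G^up` exists, i.e. when `G` has a suitable directed walk), tree arcs of each
`T^down_r` (away from the root), a zero-cost bridge arc from the root of `T^up_r` to
the root of `T^down_r`, zero-cost arcs from each source `s_i` to the level-`h`
leaves `(r, v_1, …, v_h)` with `v_h = s_i`, and zero-cost arcs from the level-`h`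
leaves with `v_h = t_i` to each sink `t_i`. -/
def Hedges {V : Type} (E : Set (V × V)) (h : ℕ) {k : ℕ} (src snk : Fin k → V) :
    Set (HV V k × HV V k) :=
  {p | (∃ (r v : V) (l : List V), p = (upNode r (v :: l), upNode r l) ∧
          l.length + 1 ≤ h ∧ ∃ w, IsWalk E v (l.headD r) w) ∨
       (∃ (r v : V) (l : List V), p = (downNode r l, downNode r (v :: l)) ∧
          l.length + 1 ≤ h ∧ ∃ w, IsWalk E (l.headD r) v w) ∨
       (∃ r : V, p = (upNode r [], downNode r [])) ∨
       (∃ (i : Fin k) (r : V) (l : List V), p = (srcNode i, upNode r l) ∧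
          l.length = h ∧ l.headD r = src i) ∨
       (∃ (i : Fin k) (r : V) (l : List V), p = (downNode r l, snkNode i) ∧
          l.length = h ∧ l.headD r = snk i)}


/-- The costs and lengths of `H` are inherited from the layered expansions: tree arcs
carry the cost/length of the corresponding layered edge; bridge and terminal arcs
are free. -/
def HCostsValid {V : Type} (E : Set (V × V)) (h : ℕ) {k : ℕ} (_src _snk : Fin k → V)
    (c' ℓ' c'' ℓ'' : (Fin (h + 1) × V) × (Fin (h + 1) × V) → ℝ)
    (cH ℓH : (HV V k × HV V k) → ℝ) : Prop :=
  (∀ (r v : V) (l : List V) (hl : l.length + 1 ≤ h), (∃ w, IsWalk E v (l.headD r) w) →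
      cH (upNode r (v :: l), upNode r l)
          = c' ((⟨l.length + 1, by omega⟩, v), (⟨l.length, by omega⟩, l.headD r)) ∧
      ℓH (upNode r (v :: l), upNode r l)
          = ℓ' ((⟨l.length + 1, by omega⟩, v), (⟨l.length, by omega⟩, l.headD r))) ∧
  (∀ (r v : V) (l : List V) (hl : l.length + 1 ≤ h), (∃ w, IsWalk E (l.headD r) v w) →
      cH (downNode r l, downNode r (v :: l))
          = c'' ((⟨l.length, by omega⟩, l.headD r), (⟨l.length + 1, by omega⟩, v)) ∧
      ℓH (downNode r l, downNode r (v :: l))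
          = ℓ'' ((⟨l.length, by omega⟩, l.headD r), (⟨l.length + 1, by omega⟩, v))) ∧
  (∀ r : V, cH (upNode r [], downNode r []) = 0 ∧ ℓH (upNode r [], downNode r []) = 0) ∧
  (∀ (i : Fin k) (r : V) (l : List V),
      cH (srcNode i, upNode r l) = 0 ∧ ℓH (srcNode i, upNode r l) = 0) ∧
  (∀ (i : Fin k) (r : V) (l : List V),
      cH (downNode r l, snkNode i) = 0 ∧ ℓH (downNode r l, snkNode i) = 0)

/-!
Every arc of `H` stands for a walk of `G` between the vertices it represents: a tree arc for a
minimizing walk of its layered edge, every other arc for the trivial walk.  Since lengths are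
nonnegative, the cost of a minimizing walk is at most its weight in the combined metric, so each arc
is at least as expensive as its walk in both metrics.  Concatenating these walks along the paths of
an `H`-solution therefore cannot raise the objective: the lengths add up, and the arcs shared by
several paths are still paid for only once.  A path from `s_i` to `t_i` has to leave the side of `H`
formed by the sources and the in-arborescences, which only the bridge at some root `r` allows; the
image of the path then visits `r`.
-/

section Sums

variable {A B M : Type*} [AddCommMonoid M] [PartialOrder M] [IsOrderedAddMonoid M]

theorem sum_toFinset_le_sum_map [DecidableEq A] {f : A → M} {w : List A}
    (hf : ∀ a ∈ w, 0 ≤ f a) : ∑ a ∈ w.toFinset, f a ≤ (w.map f).sum := by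
  have hdedup : ∑ a ∈ w.toFinset, f a = (w.dedup.map f).sum := by
    rw [← List.sum_toFinset f w.nodup_dedup]
    exact congrArg (∑ a ∈ ·, f a) (by ext; simp only [List.mem_toFinset, List.mem_dedup])
  rw [hdedup]
  exact (w.dedup_sublist.map f).sum_le_sum (by simpa only [List.forall_mem_map] using hf)

theorem sum_biUnion_le_sum_sum [DecidableEq A] {f : A → M} {s : Finset B} {t : B → Finset A}
    (hf : ∀ b ∈ s, ∀ a ∈ t b, 0 ≤ f a) :
    ∑ a ∈ s.biUnion t, f a ≤ ∑ b ∈ s, ∑ a ∈ t b, f a := by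
  have himage : s.biUnion t = (s.sigma t).image fun x => x.2 := by
    ext a
    simp only [Finset.mem_biUnion, Finset.mem_image, Finset.mem_sigma, Sigma.exists,
      exists_eq_right]
  calc ∑ a ∈ s.biUnion t, f a
      ≤ ∑ x ∈ s.sigma t, f x.2 := by
        rw [himage]
        refine Finset.sum_image_le_of_nonneg fun a ha => ?_
        obtain ⟨b, hb, hab⟩ := Finset.mem_biUnion.1 (himage ▸ ha)
        exact hf b hb a hab
    _ = ∑ b ∈ s, ∑ a ∈ t b, f a := Finset.sum_sigma _ _ _

theorem sum_map_flatMap_le {f : A → M} {g : B → M} {w : B → List A} {p : List B}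
    (h : ∀ b ∈ p, ((w b).map f).sum ≤ g b) :
    ((p.flatMap w).map f).sum ≤ (p.map g).sum := by
  rw [List.map_flatMap, List.flatMap_def, List.sum_flatten, List.map_map]
  exact List.sum_le_sum h

end Sums

theorem biUnion_toFinset_flatMap {I A B : Type*} [DecidableEq A] [DecidableEq B] (s : Finset I)
    (P : I → List B) (w : B → List A) :
    (s.biUnion fun i => ((P i).flatMap w).toFinset) =
      (s.biUnion fun i => (P i).toFinset).biUnion fun b => (w b).toFinset := by
  ext a
  simp only [Finset.mem_biUnion, List.mem_toFinset, List.mem_flatMap]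
  tauto

theorem objVal_flatMap_le {A B : Type} [DecidableEq A] [DecidableEq B] {c ℓ : A → ℝ}
    {cB ℓB : B → ℝ} {k : ℕ} {P : Fin k → List B} {w : B → List A} (hc : ∀ a, 0 ≤ c a)
    (hcost : ∀ i, ∀ b ∈ P i, ((w b).map c).sum ≤ cB b)
    (hlength : ∀ i, ∀ b ∈ P i, ((w b).map ℓ).sum ≤ ℓB b) :
    objVal c ℓ (fun i => (P i).flatMap w) ≤ objVal cB ℓB P := by
  refine add_le_add ?_ (Finset.sum_le_sum fun i _ => sum_map_flatMap_le (hlength i))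
  rw [biUnion_toFinset_flatMap]
  calc _ ≤ ∑ b ∈ Finset.univ.biUnion fun i => (P i).toFinset, ∑ a ∈ (w b).toFinset, c a :=
        sum_biUnion_le_sum_sum fun _ _ a _ => hc a
    _ ≤ ∑ b ∈ Finset.univ.biUnion fun i => (P i).toFinset, cB b := by
        refine Finset.sum_le_sum fun b hb => ?_
        obtain ⟨i, -, hbi⟩ := Finset.mem_biUnion.1 hb
        exact (sum_toFinset_le_sum_map fun a _ => hc a).trans
          (hcost i b (List.mem_toFinset.1 hbi))

namespace IsWalk

variable {W U : Type} {E : Set (W × W)} {F : Set (U × U)} {a b d : W} {p q : List (W × W)}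

theorem append (hp : IsWalk E a b p) (hq : IsWalk E b d q) : IsWalk E a d (p ++ q) := by
  induction p generalizing a with
  | nil => obtain rfl : a = b := hp; exact hq
  | cons e p ih => exact ⟨hp.1, hp.2.1, ih hp.2.2⟩

theorem mem_edges (hp : IsWalk E a b p) {e : W × W} (he : e ∈ p) : e ∈ E := by
  induction p generalizing a with
  | nil => exact absurd he List.not_mem_nil
  | cons f p ih =>
    rcases List.mem_cons.1 he with rfl | he
    · exact hp.2.1
    · exact ih hp.2.2 he

theorem flatMap {π : W → U} {w : W × W → List (U × U)}
    (hw : ∀ e ∈ E, IsWalk F (π e.1) (π e.2) (w e)) (hp : IsWalk E a b p) :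
    IsWalk F (π a) (π b) (p.flatMap w) := by
  induction p generalizing a with
  | nil => exact congrArg π hp
  | cons e p ih =>
    obtain ⟨rfl, he, hp⟩ := hp
    exact (hw e he).append (ih hp)

theorem exists_exit_edge {S : Set W} (hp : IsWalk E a b p) (ha : a ∈ S) (hb : b ∉ S) :
    ∃ q e r, p = q ++ e :: r ∧ IsWalk E a e.1 q ∧ IsWalk E e.1 b (e :: r) ∧
      e.1 ∈ S ∧ e.2 ∉ S := by
  induction p generalizing a with
  | nil => obtain rfl : a = b := hp; exact absurd ha hb
  | cons e p ih =>
    obtain ⟨rfl, he, hp⟩ := hp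
    by_cases hS : e.2 ∈ S
    · obtain ⟨q, f, r, rfl, hq, hr, hf⟩ := ih hp hS
      exact ⟨e :: q, f, r, rfl, ⟨rfl, he, hq⟩, hr, hf⟩
    · exact ⟨[], e, p, rfl, rfl, ⟨rfl, he, hp⟩, ha, hS⟩

end IsWalk

section Routing

variable {V : Type} {E : Set (V × V)} {h k : ℕ} {src snk : Fin k → V}

/-- The side of `H` containing the sources `s_i` and the in-arborescences `T^up_r`; together with
its complement it is the cut that every path between a terminal pair has to cross. -/
def sourceSide (V : Type) (k : ℕ) : Set (HV V k) :=
  {x | (∃ r l, x = upNode r l) ∨ ∃ i, x = srcNode i}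

theorem exists_eq_bridge_of_exits_sourceSide {e : HV V k × HV V k}
    (he : e ∈ Hedges E h src snk) (h₁ : e.1 ∈ sourceSide V k) (h₂ : e.2 ∉ sourceSide V k) :
    ∃ r, e = (upNode r [], downNode r []) := by
  rcases he with ⟨r, v, l, rfl, -⟩ | ⟨r, v, l, rfl, -⟩ | hbridge | ⟨i, r, l, rfl, -⟩ |
    ⟨i, r, l, rfl, -⟩
  · exact absurd (Or.inl ⟨r, l, rfl⟩) h₂
  · simp [sourceSide, upNode, downNode, srcNode] at h₁
  · exact hbridge
  · exact absurd (Or.inl ⟨r, l, rfl⟩) h₂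
  · simp [sourceSide, upNode, downNode, srcNode] at h₁

theorem exists_split_at_root {i j : Fin k} {p : List (HV V k × HV V k)}
    (hp : IsWalk (Hedges E h src snk) (srcNode i) (snkNode j) p) :
    ∃ r q₁ q₂, p = q₁ ++ q₂ ∧ IsWalk (Hedges E h src snk) (srcNode i) (upNode r []) q₁ ∧
      IsWalk (Hedges E h src snk) (upNode r []) (snkNode j) q₂ := by
  have hsrc : srcNode i ∈ sourceSide V k := Or.inr ⟨i, rfl⟩
  have hsnk : snkNode j ∉ sourceSide V k := by simp [sourceSide, upNode, srcNode, snkNode]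
  obtain ⟨q₁, e, q₂, rfl, hq₁, hq₂, h₁, h₂⟩ := hp.exists_exit_edge hsrc hsnk
  obtain ⟨r, rfl⟩ := exists_eq_bridge_of_exits_sourceSide hq₂.2.1 h₁ h₂
  exact ⟨r, q₁, _, rfl, hq₁, hq₂⟩

end Routing

/-- The vertex of `G` that a vertex of `H` is a copy of: the last entry of its tuple
`(r, v_1, …, v_i)` for a tree node, and the terminal itself for a source or a sink. -/
def baseVertex {V : Type} {k : ℕ} (src snk : Fin k → V) : HV V k → V
  | Sum.inl (r, l) => l.headD r
  | Sum.inr (Sum.inl (r, l)) => l.headD r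
  | Sum.inr (Sum.inr (Sum.inl i)) => src i
  | Sum.inr (Sum.inr (Sum.inr i)) => snk i

section Costs

variable {V : Type} {E : Set (V × V)} {c ℓ : V × V → ℝ} {h k : ℕ}
  {c' ℓ' c'' ℓ'' : (Fin (h + 1) × V) × (Fin (h + 1) × V) → ℝ}

theorem sum_map_le_upCost (hl : ∀ e, 0 ≤ ℓ e) (i : Fin (h + 1)) (w : List (V × V)) :
    (w.map c).sum ≤ upCost c ℓ k h i w :=
  List.sum_le_sum fun e _ => le_add_of_nonneg_right <|
    mul_nonneg (Real.rpow_nonneg k.cast_nonneg _) (hl e)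

theorem UpCostsValid.exists_walk (hup : UpCostsValid E c ℓ k h c' ℓ') (hl : ∀ e, 0 ≤ ℓ e)
    {x y : Fin (h + 1) × V} (hxy : (x, y) ∈ upEdges E h) :
    ∃ w, IsWalk E x.2 y.2 w ∧ (w.map c).sum ≤ c' (x, y) ∧ (w.map ℓ).sum = ℓ' (x, y) := by
  obtain ⟨w, hw, -, hcost, hlength⟩ := hup x.1 y.1 x.2 y.2 hxy
  exact ⟨w, hw, hcost ▸ sum_map_le_upCost hl x.1 w, hlength.symm⟩

theorem DownCostsValid.exists_walk (hdown : DownCostsValid E c ℓ k h c'' ℓ'')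
    (hl : ∀ e, 0 ≤ ℓ e) {x y : Fin (h + 1) × V} (hxy : (x, y) ∈ downEdges E h) :
    ∃ w, IsWalk E x.2 y.2 w ∧ (w.map c).sum ≤ c'' (x, y) ∧ (w.map ℓ).sum = ℓ'' (x, y) := by
  obtain ⟨w, hw, -, hcost, hlength⟩ := hdown y.1 x.1 x.2 y.2 hxy
  exact ⟨w, hw, hcost ▸ sum_map_le_upCost hl y.1 w, hlength.symm⟩

theorem HCostsValid.exists_walk {src snk : Fin k → V} {cH ℓH : HV V k × HV V k → ℝ}
    (hH : HCostsValid E h src snk c' ℓ' c'' ℓ'' cH ℓH) (hup : UpCostsValid E c ℓ k h c' ℓ')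
    (hdown : DownCostsValid E c ℓ k h c'' ℓ'') (hl : ∀ e, 0 ≤ ℓ e) {e : HV V k × HV V k}
    (he : e ∈ Hedges E h src snk) :
    ∃ w, IsWalk E (baseVertex src snk e.1) (baseVertex src snk e.2) w ∧
      (w.map c).sum ≤ cH e ∧ (w.map ℓ).sum = ℓH e := by
  obtain ⟨hupArc, hdownArc, hbridge, hsource, hsink⟩ := hH
  rcases he with ⟨r, v, l, rfl, hlen, hwalk⟩ | ⟨r, v, l, rfl, hlen, hwalk⟩ | ⟨r, rfl⟩ |
    ⟨i, r, l, rfl, -, hleaf⟩ | ⟨i, r, l, rfl, -, hleaf⟩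
  · obtain ⟨hcost, hlength⟩ := hupArc r v l hlen hwalk
    rw [hcost, hlength]
    exact hup.exists_walk hl ⟨_, _, v, l.headD r, rfl, rfl, hwalk⟩
  · obtain ⟨hcost, hlength⟩ := hdownArc r v l hlen hwalk
    rw [hcost, hlength]
    exact hdown.exists_walk hl ⟨_, _, l.headD r, v, rfl, rfl, hwalk⟩
  · exact ⟨[], rfl, (hbridge r).1.ge, (hbridge r).2.symm⟩
  · exact ⟨[], hleaf.symm, (hsource i r l).1.ge, (hsource i r l).2.symm⟩
  · exact ⟨[], hleaf, (hsink i r l).1.ge, (hsink i r l).2.symm⟩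

end Costs

theorem H_solution_to_junction_solution_general {V : Type} [DecidableEq V]
    (E : Set (V × V)) (c ℓ : V × V → ℝ) (hc : ∀ e, 0 ≤ c e) (hl : ∀ e, 0 ≤ ℓ e)
    (h : ℕ) {k : ℕ} (src snk : Fin k → V)
    (c' ℓ' c'' ℓ'' : (Fin (h + 1) × V) × (Fin (h + 1) × V) → ℝ)
    (hup : UpCostsValid E c ℓ k h c' ℓ') (hdown : DownCostsValid E c ℓ k h c'' ℓ'')
    (cH ℓH : HV V k × HV V k → ℝ) (hH : HCostsValid E h src snk c' ℓ' c'' ℓ'' cH ℓH)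
    (P : Fin k → List (HV V k × HV V k))
    (hP : ∀ i, IsWalk (Hedges E h src snk) (srcNode i) (snkNode i) (P i)) :
    ∃ (P' : Fin k → List (V × V)) (ρ : Fin k → V),
      (∀ i, IsWalk E (src i) (snk i) (P' i)) ∧
      (∀ i, ∃ w₁ w₂, P' i = w₁ ++ w₂ ∧
          IsWalk E (src i) (ρ i) w₁ ∧ IsWalk E (ρ i) (snk i) w₂) ∧
      objVal c ℓ P' ≤ objVal cH ℓH P := by
  choose! w hwalk hcost hlength using fun e => hH.exists_walk hup hdown hl (e := e)
  choose ρ q₁ q₂ hsplit hq₁ hq₂ using fun i => exists_split_at_root (hP i)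
  refine ⟨fun i => (P i).flatMap w, ρ, fun i => (hP i).flatMap hwalk, fun i => ?_, ?_⟩
  · exact ⟨(q₁ i).flatMap w, (q₂ i).flatMap w, by simp only [hsplit, List.flatMap_append],
      (hq₁ i).flatMap hwalk, (hq₂ i).flatMap hwalk⟩
  · exact objVal_flatMap_le hc (fun i e he => hcost e ((hP i).mem_edges he))
      fun i e he => (hlength e ((hP i).mem_edges he)).le

/-- **From `H`-solutions to junction-tree solutions of `(G,X)`.**  Every feasible
solution of `J = (H, X)` of objective value `φ` can be mapped to a feasible solution
of `(G, X)` — indeed a junction-tree solution, with each pair routed through some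
root `ρ i` — of objective value at most `φ`. -/
theorem H_solution_to_junction_solution {V : Type} [Fintype V] [DecidableEq V]
    (E : Set (V × V)) (c ℓ : V × V → ℝ)
    (hc : ∀ e, 0 ≤ c e) (hl : ∀ e, 0 ≤ ℓ e)
    (X : List (V × V)) (h : ℕ) (hh : 1 ≤ h)
    (c' ℓ' c'' ℓ'' : (Fin (h + 1) × V) × (Fin (h + 1) × V) → ℝ)
    (hup : UpCostsValid E c ℓ X.length h c' ℓ')
    (hdown : DownCostsValid E c ℓ X.length h c'' ℓ'')
    (cH ℓH : (HV V X.length × HV V X.length) → ℝ)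
    (hH : HCostsValid E h (fun i => (X.get i).1) (fun i => (X.get i).2) c' ℓ' c'' ℓ'' cH ℓH)
    (P : Fin X.length → List (HV V X.length × HV V X.length))
    (hP : ∀ i, IsWalk (Hedges E h (fun j => (X.get j).1) (fun j => (X.get j).2))
        (srcNode i) (snkNode i) (P i)) :
    ∃ (P' : Fin X.length → List (V × V)) (ρ : Fin X.length → V),
      (∀ i, IsWalk E (X.get i).1 (X.get i).2 (P' i)) ∧
      (∀ i, ∃ w₁ w₂, P' i = w₁ ++ w₂ ∧
          IsWalk E (X.get i).1 (ρ i) w₁ ∧ IsWalk E (ρ i) (X.get i).2 w₂) ∧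
      objVal c ℓ P' ≤ objVal cH ℓH P := by
  exact H_solution_to_junction_solution_general E c ℓ hc hl h _ _ c' ℓ' c'' ℓ'' hup hdown
    cH ℓH hH P hP

end BaB
end

section
/- Let f : [0,∞) → [0,∞) be nondecreasing and subadditive (f(x+y) ≤ f(x) + f(y) for all x, y ≥ 0). Then: (a) for every t > 0 and every x ≥ 0, f(x) ≤ f(t) + (f(t)/t)·x; and (b) for every ε > 0 and every D ≥ 1 there exists a finite set S of positive reals such that the function g(x) := min_{t∈S} ( f(t) + (f(t)/t)·x ) satisfies f(x) ≤ g(x) ≤ (2+ε)·f(x) for every x ∈ [1, D]. (Part (b) is the pointwise form of the statement that every buy-at-bulk instance is equivalent, up to a factor 2+ε in objective value for every feasible solution, to a two-metric network design instance obtained by replacing each edge with parallel copies carrying fixed cost f(t) and per-unit length f(t)/t for t ∈ S.) -/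
/-!
The affine cost `f t + (f t / t) * x` dominates `f` because each piece of length `t` peeled off the
load costs at most `f t`, which is exactly what the linear term loses, until at most `t` is left,
for which the fixed cost pays. In the other direction, if `t ≤ x ≤ (1 + ε) * t`, the fixed cost is
at most `f x` and the linear term at most `(1 + ε) * f x`; a geometric progression of ratio `1 + ε`
provides such a `t` for every `x` in a compact interval of positive numbers.
-/

/-- The cost of routing load `x` on the copy of an edge of cost function `f` that carries fixed cost
`f t` and per-unit length `f t / t`; meaningful for `0 < t` only. -/
def twoMetricCost {K : Type*} [Field K] (f : K → K) (t x : K) : K :=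
  f t + f t / t * x

theorem twoMetricCost_sub_add {K : Type*} [Field K] (f : K → K) {t : K} (ht : t ≠ 0) (x : K) :
    twoMetricCost f t (x - t) + f t = twoMetricCost f t x := by
  unfold twoMetricCost
  field_simp
  ring

section

open Set

theorem nonneg_of_monotoneOn_of_subadditive {M N : Type*} [AddZeroClass M] [Preorder M]
    [AddCommMonoid N] [PartialOrder N] [IsOrderedCancelAddMonoid N] {f : M → N}
    (hmono : MonotoneOn f (Ici 0)) (hsub : ∀ x y, 0 ≤ x → 0 ≤ y → f (x + y) ≤ f x + f y)
    {x : M} (hx : 0 ≤ x) : 0 ≤ f x := by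
  have f_zero_le : f 0 ≤ f 0 + f 0 := by simpa only [add_zero] using hsub 0 0 le_rfl le_rfl
  have f_zero_nonneg : 0 ≤ f 0 := (le_add_iff_nonneg_left _).1 f_zero_le
  exact f_zero_nonneg.trans (hmono self_mem_Ici hx hx)

variable {K : Type*} [Field K] [LinearOrder K] [IsStrictOrderedRing K] {f : K → K}

theorem le_twoMetricCost_of_le (hmono : MonotoneOn f (Ici 0)) {t x : K} (hft : 0 ≤ f t)
    (hx : 0 ≤ x) (hxt : x ≤ t) : f x ≤ twoMetricCost f t x := by
  have ht : 0 ≤ t := hx.trans hxt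
  calc
    f x ≤ f t := hmono hx ht hxt
    _ ≤ twoMetricCost f t x := le_add_of_nonneg_right (by positivity)

theorem le_twoMetricCost [Archimedean K] (hmono : MonotoneOn f (Ici 0))
    (hsub : ∀ x y, 0 ≤ x → 0 ≤ y → f (x + y) ≤ f x + f y) {t x : K} (ht : 0 < t) (hx : 0 ≤ x) :
    f x ≤ twoMetricCost f t x := by
  have hft : 0 ≤ f t := nonneg_of_monotoneOn_of_subadditive hmono hsub ht.le
  obtain ⟨n, hn⟩ := Archimedean.arch x ht
  induction n generalizing x with
  | zero => exact le_twoMetricCost_of_le hmono hft hx (hn.trans (by simpa using ht.le))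
  | succ n ih =>
    obtain hxt | htx := le_total x t
    · exact le_twoMetricCost_of_le hmono hft hx hxt
    · have hsub_nonneg : 0 ≤ x - t := sub_nonneg.2 htx
      calc
        f x = f (x - t + t) := by rw [sub_add_cancel]
        _ ≤ f (x - t) + f t := hsub _ _ hsub_nonneg ht.le
        _ ≤ twoMetricCost f t (x - t) + f t := by
          gcongr
          exact ih hsub_nonneg (sub_le_iff_le_add.2 (succ_nsmul t n ▸ hn))
        _ = twoMetricCost f t x := twoMetricCost_sub_add f ht.ne' x

theorem twoMetricCost_le_of_le_mul {c t x : K} (hc : 0 ≤ c) (ht : 0 < t) (hft : 0 ≤ f t)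
    (hfx : f t ≤ f x) (hx : x ≤ c * t) : twoMetricCost f t x ≤ (1 + c) * f x :=
  calc
    twoMetricCost f t x ≤ f t + f t / t * (c * t) := by unfold twoMetricCost; gcongr
    _ = (1 + c) * f t := by field_simp
    _ ≤ (1 + c) * f x := by gcongr

theorem exists_finset_forall_Icc_le_mul [Archimedean K] {a c : K} (ha : 0 < a) (hc : 1 < c)
    (b : K) :
    ∃ S : Finset K, S.Nonempty ∧ (∀ t ∈ S, 0 < t) ∧ ∀ x ∈ Icc a b, ∃ t ∈ S, t ≤ x ∧ x ≤ c * t := by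
  obtain ⟨N, hN⟩ := pow_unbounded_of_one_lt (b / a) hc
  refine ⟨(Finset.range (N + 1)).image (fun n ↦ a * c ^ n),
    Finset.nonempty_range_add_one.image _, ?_, ?_⟩
  · simp only [Finset.forall_mem_image]
    intros
    positivity
  · rintro x ⟨hax, hxb⟩
    obtain ⟨n, hnx, hxn⟩ := exists_nat_pow_near ((one_le_div ha).2 hax) hc
    have hnN : n < N := (pow_lt_pow_iff_right₀ hc).1 <|
      calc
        c ^ n ≤ x / a := hnx
        _ ≤ b / a := by gcongr
        _ < c ^ N := hN
    refine ⟨a * c ^ n, Finset.mem_image_of_mem _ (Finset.mem_range.2 (by lia)),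
      (le_div_iff₀' ha).1 hnx, ?_⟩
    calc
      x ≤ a * c ^ (n + 1) := ((div_lt_iff₀' ha).1 hxn).le
      _ = c * (a * c ^ n) := by ring

theorem subadditive_two_metric_approx_general [Archimedean K] (hmono : MonotoneOn f (Ici 0))
    (hsub : ∀ x y, 0 ≤ x → 0 ≤ y → f (x + y) ≤ f x + f y) :
    (∀ t, 0 < t → ∀ x, 0 ≤ x → f x ≤ twoMetricCost f t x) ∧
    (∀ ε, 0 < ε → ∀ a, 0 < a → ∀ b, ∃ (S : Finset K) (hS : S.Nonempty), (∀ t ∈ S, 0 < t) ∧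
      ∀ x, a ≤ x → x ≤ b →
        f x ≤ S.inf' hS (fun t ↦ twoMetricCost f t x) ∧
        S.inf' hS (fun t ↦ twoMetricCost f t x) ≤ (2 + ε) * f x) := by
  refine ⟨fun t ht x hx ↦ le_twoMetricCost hmono hsub ht hx, fun ε hε a ha b ↦ ?_⟩
  obtain ⟨S, hS, hpos, hnet⟩ := exists_finset_forall_Icc_le_mul ha (lt_add_of_pos_right 1 hε) b
  refine ⟨S, hS, hpos, fun x hax hxb ↦ ?_⟩
  have hx : 0 ≤ x := ha.le.trans hax
  constructor
  · exact Finset.le_inf' _ _ fun t ht ↦ le_twoMetricCost hmono hsub (hpos t ht) hx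
  · obtain ⟨t, htS, htx, hxt⟩ := hnet x ⟨hax, hxb⟩
    have ht : 0 < t := hpos t htS
    calc
      S.inf' hS (fun t ↦ twoMetricCost f t x) ≤ twoMetricCost f t x := Finset.inf'_le _ htS
      _ ≤ (1 + (1 + ε)) * f x :=
        twoMetricCost_le_of_le_mul (by positivity) ht
          (nonneg_of_monotoneOn_of_subadditive hmono hsub ht.le) (hmono ht.le hx htx) hxt
      _ = (2 + ε) * f x := by ring

end


/-- **Two-metric approximation of subadditive cost functions.**  Let
`f : [0,∞) → [0,∞)` be nondecreasing and subadditive.  Then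
(a) for every `t > 0` and `x ≥ 0`, `f x ≤ f t + (f t / t) · x`; and
(b) for every `ε > 0` and `D ≥ 1` there is a nonempty finite set `S` of positive
reals such that `g x := min_{t ∈ S} (f t + (f t / t) · x)` satisfies
`f x ≤ g x ≤ (2 + ε) · f x` for all `x ∈ [1, D]`.  (This is the pointwise form of
the reduction of buy-at-bulk to two-metric network design, replacing each edge by
parallel copies with fixed cost `f t` and per-unit length `f t / t`, `t ∈ S`.) -/
theorem subadditive_two_metric_approx (f : ℝ → ℝ)
    (hnonneg : ∀ x, 0 ≤ x → 0 ≤ f x)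
    (hmono : ∀ x y, 0 ≤ x → x ≤ y → f x ≤ f y)
    (hsub : ∀ x y, 0 ≤ x → 0 ≤ y → f (x + y) ≤ f x + f y) :
    (∀ t : ℝ, 0 < t → ∀ x : ℝ, 0 ≤ x → f x ≤ f t + f t / t * x) ∧
    (∀ ε : ℝ, 0 < ε → ∀ D : ℝ, 1 ≤ D →
      ∃ (S : Finset ℝ) (hS : S.Nonempty), (∀ t ∈ S, 0 < t) ∧
        ∀ x : ℝ, 1 ≤ x → x ≤ D →
          f x ≤ S.inf' hS (fun t => f t + f t / t * x) ∧
          S.inf' hS (fun t => f t + f t / t * x) ≤ (2 + ε) * f x) := by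
  have h := subadditive_two_metric_approx_general (fun x hx y _ hxy ↦ hmono x y hx hxy) hsub
  exact ⟨h.1, fun ε hε D _ ↦ h.2 ε hε 1 one_pos D⟩
end
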